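/- Assume (H2). There exists a constant C₁ > 1, depending only on a₀ and C₀, such that for every ε₀ ∈ (0, 1/(2C₁)), every λ > 1 and every η ∈ (0, 1/2): N(λ; q̂^Ã_K) ≤ (|K| β / (2π e^{t₀})) Σ_{k=0}^∞ [Λ_M(λ) - 1/4 - (2k+1)β]₊⁰, where β = b(x₀, e^{t₀}), Λ_M(λ) = (1 - η²)⁻¹ ( λ/(1 - ε₀ C₁) + (ε₀⁴/η²) C₁ β² ), and [ρ]₊⁰ = 1 if ρ > 0 and 0 otherwise. -/

import Mathlib

open MeasureTheory Real Filter

noncomputable section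

/-- The upper half-plane ℍ as a subset of ℝ². -/
def UHP : Set (ℝ × ℝ) := {p : ℝ × ℝ | 0 < p.2}

/-- The hyperbolic measure `dv = y⁻² dx dy` on ℍ. -/
def volH : Measure (ℝ × ℝ) :=
  (volume.restrict UHP).withDensity fun p => ENNReal.ofReal ((p.2 ^ 2)⁻¹)

/-- x-derivative of a complex function on ℝ². -/
def dX (f : ℝ × ℝ → ℂ) (p : ℝ × ℝ) : ℂ := fderiv ℝ f p (1, 0)

/-- y-derivative of a complex function on ℝ². -/
def dY (f : ℝ × ℝ → ℂ) (p : ℝ × ℝ) : ℂ := fderiv ℝ f p (0, 1)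

/-- x-derivative of a real function on ℝ². -/
def dXr (f : ℝ × ℝ → ℝ) (p : ℝ × ℝ) : ℝ := fderiv ℝ f p (1, 0)

/-- y-derivative of a real function on ℝ². -/
def dYr (f : ℝ × ℝ → ℝ) (p : ℝ × ℝ) : ℝ := fderiv ℝ f p (0, 1)

/-- The magnetic field `b̃ = y² (∂ₓA₂ - ∂_yA₁)`. -/
def fieldB (A₁ A₂ : ℝ × ℝ → ℝ) (p : ℝ × ℝ) : ℝ := p.2 ^ 2 * (dXr A₂ p - dYr A₁ p)

/-- The magnetic intensity `b = |b̃|`. -/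
def intenB (A₁ A₂ : ℝ × ℝ → ℝ) (p : ℝ × ℝ) : ℝ := |fieldB A₁ A₂ p|

/-- Smooth compactly supported test functions with support inside a set `Ω`. -/
def IsTestOn (Ω : Set (ℝ × ℝ)) (f : ℝ × ℝ → ℂ) : Prop :=
  ContDiff ℝ (⊤ : ℕ∞) f ∧ HasCompactSupport f ∧ tsupport f ⊆ Ω

/-- The quadratic form of the magnetic Laplacian on ℍ. -/
def qA (A₁ A₂ : ℝ × ℝ → ℝ) (f : ℝ × ℝ → ℂ) : ℝ :=
  ∫ p, p.2 ^ 2 * (‖-Complex.I * dX f p - (A₁ p : ℂ) * f p‖ ^ 2 +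
    ‖-Complex.I * dY f p - (A₂ p : ℂ) * f p‖ ^ 2) ∂volH

/-- hyperbolic distance from `(x,y)` to `(0,1)`. -/
def hDist (p : ℝ × ℝ) : ℝ :=
  2 * Real.arsinh (Real.sqrt (p.1 ^ 2 + (p.2 - 1) ^ 2) / (2 * Real.sqrt p.2))

/-- (H1) : the magnetic intensity tends to +∞ at infinity. -/
def H1 (A₁ A₂ : ℝ × ℝ → ℝ) : Prop :=
  ∀ M : ℝ, ∃ R : ℝ, ∀ p ∈ UHP, R ≤ hDist p → M ≤ intenB A₁ A₂ p

/-- (H2) : control of the derivative of the magnetic field. -/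
def H2 (C₀ : ℝ) (A₁ A₂ : ℝ × ℝ → ℝ) : Prop :=
  ∀ p ∈ UHP, p.2 * Real.sqrt ((dXr (fieldB A₁ A₂) p) ^ 2 + (dYr (fieldB A₁ A₂) p) ^ 2)
    ≤ C₀ * (intenB A₁ A₂ p + 1)

/-- Counting function of a quadratic form `q` with form domain `dom` and squared
norm `nsq`, via Glazman's lemma. -/
def NN (q : (ℝ × ℝ → ℂ) → ℝ) (dom : Set (ℝ × ℝ → ℂ)) (nsq : (ℝ × ℝ → ℂ) → ℝ)
    (lam : ℝ) : ℕ :=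
  sSup {n : ℕ | ∃ V : Submodule ℂ (ℝ × ℝ → ℂ), (V : Set (ℝ × ℝ → ℂ)) ⊆ dom ∧
    Module.finrank ℂ V = n ∧ ∀ u ∈ V, u ≠ 0 → q u < lam * nsq u}

/-- Heaviside function `[ρ]₊⁰`. -/
def heav (ρ : ℝ) : ℝ := if 0 < ρ then 1 else 0


/-- The rectangle `K = X₀ + K₀` with `K₀ = (-ε₀ a e^{t₀}/2, ε₀ a e^{t₀}/2) × (-ε₀/2, ε₀/2)`. -/
def Krect (x₀ t₀ a ε₀ : ℝ) : Set (ℝ × ℝ) :=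
  Set.Ioo (x₀ - ε₀ * a * Real.exp t₀ / 2) (x₀ + ε₀ * a * Real.exp t₀ / 2) ×ˢ
    Set.Ioo (t₀ - ε₀ / 2) (t₀ + ε₀ / 2)

/-- `Ã₁(x,t) = -∫_{e^{t₀}}^{e^t} b̃(x,s) s⁻² ds`. -/
def Atil (A₁ A₂ : ℝ × ℝ → ℝ) (t₀ : ℝ) (p : ℝ × ℝ) : ℝ :=
  -∫ s in Real.exp t₀..Real.exp p.2, fieldB A₁ A₂ (p.1, s) / s ^ 2

/-- `A₁⁰(x,t) = -(t - t₀) e^{-t₀} b̃₀`. -/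
def Azero (t₀ b₀ : ℝ) (p : ℝ × ℝ) : ℝ := -(p.2 - t₀) * Real.exp (-t₀) * b₀

/-- The Dirichlet form `q̂^Ã_K`. -/
def qhatK (A₁ A₂ : ℝ × ℝ → ℝ) (x₀ t₀ a ε₀ : ℝ) (w : ℝ × ℝ → ℂ) : ℝ :=
  ∫ p in Krect x₀ t₀ a ε₀,
    (Real.exp (2 * p.2) * ‖-Complex.I * dX w p - (Atil A₁ A₂ t₀ p : ℂ) * w p‖ ^ 2
      + ‖dY w p‖ ^ 2 + (1/4) * ‖w p‖ ^ 2)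

/-- The Dirichlet form `q̂^{Ã,0}_K` (with frozen factor `e^{2t₀}`). -/
def qhatK0 (A₁ A₂ : ℝ × ℝ → ℝ) (x₀ t₀ a ε₀ : ℝ) (w : ℝ × ℝ → ℂ) : ℝ :=
  ∫ p in Krect x₀ t₀ a ε₀,
    (Real.exp (2 * t₀) * ‖-Complex.I * dX w p - (Atil A₁ A₂ t₀ p : ℂ) * w p‖ ^ 2
      + ‖dY w p‖ ^ 2 + (1/4) * ‖w p‖ ^ 2)

/-- The Dirichlet form `q^{A⁰,0}_K` of the frozen constant magnetic field `b̃₀`. -/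
def qK0 (x₀ t₀ a ε₀ b₀ : ℝ) (w : ℝ × ℝ → ℂ) : ℝ :=
  ∫ p in Krect x₀ t₀ a ε₀,
    (Real.exp (2 * t₀) * ‖-Complex.I * dX w p - (Azero t₀ b₀ p : ℂ) * w p‖ ^ 2
      + ‖dY w p‖ ^ 2 + (1/4) * ‖w p‖ ^ 2)


/-- Dirichlet eigenvalue counting function of `q̂^Ã_K` on `L²(K)`. -/
def NKA (A₁ A₂ : ℝ × ℝ → ℝ) (x₀ t₀ a ε₀ lam : ℝ) : ℕ :=
  NN (qhatK A₁ A₂ x₀ t₀ a ε₀) {w | IsTestOn (Krect x₀ t₀ a ε₀) w}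
    (fun w => ∫ p in Krect x₀ t₀ a ε₀, ‖w p‖ ^ 2) lam


/-- integrability of continuous compactly supported real functions, with support control. -/
lemma int_cs {E : Type*} [NormedAddCommGroup E] {f : ℝ → ℂ} {h : ℝ → E} (hf : HasCompactSupport f) (hh : Continuous h)
    (h0 : ∀ t, f t = 0 → h t = 0) : Integrable h := by
  refine hh.integrable_of_hasCompactSupport (hf.mono fun t ht => ?_)
  intro h1
  exact ht (h0 t h1)

lemma ladder_base (c : ℝ) (f f' : ℝ → ℂ) (hd : ∀ t, HasDerivAt f (f' t) t)
    (hc' : Continuous f') (hs : HasCompactSupport f) :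
    ∫ t, (t - c) * inner ℝ (f t) (f' t) = -(1/2) * ∫ t, ‖f t‖ ^ 2 := by
  have hc : Continuous f := continuous_iff_continuousAt.2 fun t => (hd t).continuousAt
  have i1 : Integrable fun t => ‖f t‖ ^ 2 := int_cs hs (by fun_prop) (by intro t h; simp [h])
  have i2 : Integrable fun t => (t - c) * inner ℝ (f t) (f' t) :=
    int_cs hs (by fun_prop) (by intro t h; simp [h])
  have key := integral_eq_zero_of_hasDerivAt_of_integrable
    (f := fun t => (t - c) * ‖f t‖ ^ 2)
    (f' := fun t => ‖f t‖ ^ 2 + 2 * ((t - c) * inner ℝ (f t) (f' t)))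
    (by
      intro t
      have := ((hasDerivAt_id t).sub_const c).mul (hd t).norm_sq
      refine this.congr_deriv ?_
      simp; ring)
    (i1.add (i2.const_mul 2))
    (int_cs hs (by fun_prop) (by intro t h; simp [h]))
  rw [integral_add i1 (i2.const_mul 2), integral_const_mul] at key
  linarith

lemma ladder_expand (β c ε : ℝ) (f f' : ℝ → ℂ) (hd : ∀ t, HasDerivAt f (f' t) t)
    (hc' : Continuous f') (hs : HasCompactSupport f)
    (hs' : HasCompactSupport f') :
    ∫ t, ‖ε • f' t + (β * (t - c)) • f t‖ ^ 2 =
      (∫ t, (ε ^ 2 * ‖f' t‖ ^ 2 + β ^ 2 * (t - c) ^ 2 * ‖f t‖ ^ 2))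
        - ε * β * ∫ t, ‖f t‖ ^ 2 := by
  have hc : Continuous f := continuous_iff_continuousAt.2 fun t => (hd t).continuousAt
  have i1 : Integrable fun t => ε ^ 2 * ‖f' t‖ ^ 2 :=
    int_cs hs' (by fun_prop) (by intro t h; simp [h])
  have i3 : Integrable fun t => β ^ 2 * (t - c) ^ 2 * ‖f t‖ ^ 2 :=
    int_cs hs (by fun_prop) (by intro t h; simp [h])
  have i2 : Integrable fun t => (t - c) * inner ℝ (f t) (f' t) :=
    int_cs hs (by fun_prop) (by intro t h; simp [h])
  have e : ∀ t, ‖ε • f' t + (β * (t - c)) • f t‖ ^ 2 =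
      (ε ^ 2 * ‖f' t‖ ^ 2 + β ^ 2 * (t - c) ^ 2 * ‖f t‖ ^ 2) +
        (2 * ε * β) * ((t - c) * inner ℝ (f t) (f' t)) := by
    intro t
    rw [norm_add_sq_real, norm_smul, norm_smul, inner_smul_left, inner_smul_right,
      real_inner_comm (f t) (f' t)]
    simp only [mul_pow, Real.norm_eq_abs, sq_abs, conj_trivial]
    ring
  simp_rw [e]
  have i13 : Integrable fun t => ε ^ 2 * ‖f' t‖ ^ 2 + β ^ 2 * (t - c) ^ 2 * ‖f t‖ ^ 2 :=
    i1.add i3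
  rw [integral_add i13 (i2.const_mul _), integral_const_mul, ladder_base c f f' hd hc' hs]
  ring

lemma hcs_deriv {f f' : ℝ → ℂ} (hd : ∀ t, HasDerivAt f (f' t) t) (hs : HasCompactSupport f) :
    HasCompactSupport f' := by
  have : f' = deriv f := funext fun t => (hd t).deriv.symm
  rw [this]; exact hs.deriv

lemma ladder (β c : ℝ) (hβ : 0 < β) (l : ℕ) : ∀ f f' : ℝ → ℂ, (∀ t, HasDerivAt f (f' t) t) →
    Continuous f' → HasCompactSupport f →
    (∀ k < l, ∫ t, ((t - c) ^ k * Real.exp (-(β * (t - c) ^ 2 / 2))) • f t = 0) →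
    2 * l * β * ∫ t, ‖f t‖ ^ 2 ≤ ∫ t, ‖f' t + (β * (t - c)) • f t‖ ^ 2 := by
  induction l with
  | zero =>
    intro f f' hd hc' hs hk
    simp only [Nat.cast_zero, mul_zero, zero_mul]
    exact integral_nonneg fun t => by positivity
  | succ l ih =>
    intro f f' hd hc' hs hk
    have hc : Continuous f := continuous_iff_continuousAt.2 fun t => (hd t).continuousAt
    have hs' := hcs_deriv hd hs
    obtain ⟨S, hSpos, hS⟩ : ∃ S : ℝ, 0 < S ∧ ∀ t, S < |t| → f t = 0 := by
      obtain ⟨S, hS⟩ := hs.isCompact.isBounded.subset_closedBall 0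
      refine ⟨max S 1, by positivity, fun t ht => ?_⟩
      by_contra hne
      have := hS (subset_tsupport f hne)
      simp only [Metric.mem_closedBall, dist_zero_right, Real.norm_eq_abs] at this
      exact absurd (this.trans (le_max_left S 1)) (not_le.2 ht)
    set φ : ℝ → ℂ := fun r => Real.exp (-(β * (r - c) ^ 2 / 2)) • f r with hφ
    have hφc : Continuous φ := by fun_prop
    have hφs : ∀ t, S < |t| → φ t = 0 := fun t ht => by simp [hφ, hS t ht]
    set F : ℝ → ℂ := fun s => ∫ r in (-S)..s, φ r with hF
    have hFd : ∀ t, HasDerivAt F (φ t) t := fun t =>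
      intervalIntegral.integral_hasDerivAt_right (hφc.intervalIntegrable _ _)
        (hφc.stronglyMeasurableAtFilter _ _) hφc.continuousAt
    have hFc : Continuous F := continuous_iff_continuousAt.2 fun t => (hFd t).continuousAt
    have hφtot : ∫ r, φ r = 0 := by
      have := hk 0 (Nat.succ_pos l)
      simpa [hφ] using this
    have hF0 : ∀ t, S < |t| → F t = 0 := by
      intro t ht
      rcases lt_abs.1 ht with h | h
      · have h1 : ∫ r in (-S)..t, φ r = ∫ r, φ r := by
          apply intervalIntegral.integral_eq_integral_of_support_subset
          intro r hr
          by_contra hcon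
          apply hr
          by_cases hS2 : S < |r|
          · exact hφs r hS2
          · have : |r| ≤ S := not_lt.1 hS2
            rw [abs_le] at this
            have hr1 : r = -S := by
              by_contra hne
              exact hcon ⟨lt_of_le_of_ne this.1 (Ne.symm hne), by linarith [this.2]⟩
            -- by continuity
            have : Set.EqOn φ (fun _ => 0) (closure (Set.Iio (-S))) := by
              apply Set.EqOn.closure _ hφc continuous_const
              intro x hx
              exact hφs x (lt_abs.2 (Or.inr (by linarith [Set.mem_Iio.1 hx])))
            exact this (by rw [closure_Iio]; simp [hr1])
        simp only [hF]; rw [h1, hφtot]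
      · simp only [hF]
        rw [intervalIntegral.integral_symm, neg_eq_zero]
        apply intervalIntegral.integral_zero_ae
        rw [Set.uIoc_of_le (by linarith)]
        have : ∀ᵐ r : ℝ, r ≠ -S := by simp [ae_iff]
        filter_upwards [this] with r hr1 hr
        have : r < -S := lt_of_le_of_ne hr.2 hr1
        exact hφs r (lt_abs.2 (Or.inr (by linarith)))
    set g : ℝ → ℂ := fun s => -(Real.exp (β * (s - c) ^ 2 / 2) • F s) with hg
    set g' : ℝ → ℂ := fun s => (β * (s - c)) • g s - f s with hg'
    have hgs : HasCompactSupport g := by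
      refine HasCompactSupport.of_support_subset_isCompact (isCompact_Icc (a := -S) (b := S)) ?_
      intro t ht
      by_contra hcon
      apply ht
      have : S < |t| := by
        by_contra h; exact hcon (abs_le.1 (not_lt.1 h))
      simp [hg, hF0 t this]
    have hgd : ∀ t, HasDerivAt g (g' t) t := by
      intro t
      have h1 : HasDerivAt (fun s : ℝ => Real.exp (β * (s - c) ^ 2 / 2))
          (Real.exp (β * (t - c) ^ 2 / 2) * (β * (t - c))) t := by
        apply HasDerivAt.exp
        have := ((((hasDerivAt_id t).sub_const c).pow 2).const_mul β).div_const 2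
        refine this.congr_deriv ?_
        simp; ring
      have := (h1.smul (hFd t)).neg
      refine this.congr_deriv ?_
      simp only [hg', hg, hφ, smul_smul, ← Real.exp_add]
      rw [show β * (t - c) ^ 2 / 2 + -(β * (t - c) ^ 2 / 2) = 0 by ring, Real.exp_zero]
      simp only [Complex.real_smul]; push_cast; ring
    have hgc : Continuous g := continuous_iff_continuousAt.2 fun t => (hgd t).continuousAt
    have hgc' : Continuous g' := by fun_prop
    have hgs' := hcs_deriv hgd hgs
    have hFs : HasCompactSupport F := by
      refine HasCompactSupport.of_support_subset_isCompact (isCompact_Icc (a := -S) (b := S)) ?_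
      intro t ht
      by_contra hcon
      apply ht
      have : S < |t| := by
        by_contra h; exact hcon (abs_le.1 (not_lt.1 h))
      exact hF0 t this
    have hmom : ∀ k < l, ∫ t, ((t - c) ^ k * Real.exp (-(β * (t - c) ^ 2 / 2))) • g t = 0 := by
      intro k hkl
      have e : ∀ t, ((t - c) ^ k * Real.exp (-(β * (t - c) ^ 2 / 2))) • g t
          = -((t - c) ^ k • F t) := by
        intro t
        simp only [hg, smul_neg, smul_smul, mul_assoc, ← Real.exp_add]
        rw [show -(β * (t - c) ^ 2 / 2) + β * (t - c) ^ 2 / 2 = 0 by ring, Real.exp_zero, mul_one]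
      simp_rw [e]
      have i1 : Integrable fun t => ((k + 1 : ℝ) * (t - c) ^ k) • F t :=
        int_cs hFs (by fun_prop) (by intro t h; simp [h])
      have i2 : Integrable fun t => (t - c) ^ (k + 1) • φ t :=
        int_cs hs (by fun_prop) (by intro t h; simp [hφ, h])
      have key := integral_eq_zero_of_hasDerivAt_of_integrable
        (f := fun t => (t - c) ^ (k + 1) • F t)
        (f' := fun t => (t - c) ^ (k + 1) • φ t + ((k + 1 : ℝ) * (t - c) ^ k) • F t)
        (by
          intro t
          have := (((hasDerivAt_id t).sub_const c).pow (k + 1)).smul (hFd t)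
          refine this.congr_deriv ?_
          simp)
        (i2.add i1)
        (int_cs hFs (by fun_prop) (by intro t h; simp [h]))
      rw [integral_add i2 i1] at key
      have h3 := hk (k + 1) (by omega)
      simp only [mul_smul] at h3
      rw [show (∫ t, (t - c) ^ (k + 1) • φ t) = 0 from h3, zero_add] at key
      simp only [mul_smul] at key
      rw [integral_smul] at key
      have hk1 : (k + 1 : ℝ) ≠ 0 := by positivity
      rw [integral_neg, (smul_eq_zero.1 key).resolve_left hk1, neg_zero]
    have IH := ih g g' hgd hgc' hgs hmom
    have E1 := ladder_expand β c 1 g g' hgd hgc' hgs hgs'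
    have E2 := ladder_expand β c (-1) g g' hgd hgc' hgs hgs'
    have E3 : ∀ t, ‖(-1 : ℝ) • g' t + (β * (t - c)) • g t‖ ^ 2 = ‖f t‖ ^ 2 := by
      intro t; congr 2; simp [hg']
    simp_rw [E3] at E2
    simp only [one_smul] at E1
    -- pairing
    have i1 : Integrable fun t => inner ℝ (g t) (f' t + (β * (t - c)) • f t) :=
      int_cs hgs (by fun_prop) (by intro t h; simp [h])
    have i2 : Integrable fun t => ‖f t‖ ^ 2 := int_cs hs (by fun_prop) (by intro t h; simp [h])
    have i3 : Integrable fun t => ‖g t‖ ^ 2 := int_cs hgs (by fun_prop) (by intro t h; simp [h])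
    have i4 : Integrable fun t => ‖f' t + (β * (t - c)) • f t‖ ^ 2 := by
      refine Continuous.integrable_of_hasCompactSupport (by fun_prop) ?_
      have : HasCompactSupport fun t => f' t + (β * (t - c)) • f t :=
        hs'.add (hs.smul_left (f := fun t => β * (t - c)))
      exact this.norm.comp_left (g := fun x : ℝ => x ^ 2) (by simp)
    have pair := integral_eq_zero_of_hasDerivAt_of_integrable
      (f := fun t => inner ℝ (g t) (f t))
      (f' := fun t => inner ℝ (g t) (f' t + (β * (t - c)) • f t) - ‖f t‖ ^ 2)
      (by
        intro t
        have := (hgd t).inner ℝ (hd t)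
        refine this.congr_deriv ?_
        simp only [hg', inner_add_right, inner_sub_left, inner_smul_left, inner_smul_right,
          real_inner_self_eq_norm_sq, conj_trivial]
        ring)
      (i1.sub i2)
      (int_cs hs (by fun_prop) (by intro t h; simp [h]))
    rw [integral_sub i1 i2] at pair
    have pos : 0 ≤ ∫ t, ‖(f' t + (β * (t - c)) • f t) - (2 * (l + 1) * β) • g t‖ ^ 2 :=
      integral_nonneg fun t => by positivity
    have e5 : ∀ t, ‖(f' t + (β * (t - c)) • f t) - (2 * (l + 1) * β) • g t‖ ^ 2 =
        ‖f' t + (β * (t - c)) • f t‖ ^ 2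
        - (4 * (l + 1) * β) * inner ℝ (g t) (f' t + (β * (t - c)) • f t)
        + (2 * (l + 1) * β) ^ 2 * ‖g t‖ ^ 2 := by
      intro t
      rw [norm_sub_sq_real, inner_smul_right, norm_smul, real_inner_comm, mul_pow,
        Real.norm_eq_abs, sq_abs]
      ring
    simp_rw [e5] at pos
    have i41 : Integrable fun t => ‖f' t + (β * (t - c)) • f t‖ ^ 2
        - (4 * (l + 1) * β) * inner ℝ (g t) (f' t + (β * (t - c)) • f t) := i4.sub (i1.const_mul _)
    rw [integral_add i41 (i3.const_mul _), integral_sub i4 (i1.const_mul _),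
      integral_const_mul, integral_const_mul] at pos
    push_cast
    have hβl : 0 < 2 * (l + 1) * β := by positivity
    have hgf : 2 * (l + 1) * β * ∫ t, ‖g t‖ ^ 2 ≤ ∫ t, ‖f t‖ ^ 2 := by
      simp only [one_pow, one_mul, neg_sq, neg_mul, sub_neg_eq_add] at E1 E2
      linarith
    have := mul_le_mul_of_nonneg_left hgf hβl.le
    have e6 : ∫ t, inner ℝ (g t) (f' t + (β * (t - c)) • f t) = ∫ t, ‖f t‖ ^ 2 := by linarith
    rw [e6] at pos
    nlinarith

lemma harm (β c : ℝ) (hβ : 0 < β) (l : ℕ) (f f' : ℝ → ℂ) (hd : ∀ t, HasDerivAt f (f' t) t)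
    (hc' : Continuous f') (hs : HasCompactSupport f)
    (hm : ∀ k < l, ∫ t, ((t - c) ^ k * Real.exp (-(β * (t - c) ^ 2 / 2))) • f t = 0) :
    (2 * l + 1) * β * ∫ t, ‖f t‖ ^ 2 ≤
      ∫ t, (‖f' t‖ ^ 2 + β ^ 2 * (t - c) ^ 2 * ‖f t‖ ^ 2) := by
  have h1 := ladder β c hβ l f f' hd hc' hs hm
  have E1 := ladder_expand β c 1 f f' hd hc' hs (hcs_deriv hd hs)
  simp only [one_smul, one_pow, one_mul] at E1
  linarith

/-- partial Fourier transform in x over an interval. -/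
def hatx (A B : ℝ) (g : ℝ × ℝ → ℂ) (ξ t : ℝ) : ℂ :=
  ∫ x in A..B, Complex.exp (-(Complex.I * ξ * x)) * g (x, t)

lemma hatx_cont (A B : ℝ) {g : ℝ × ℝ → ℂ} (hg : Continuous g) (ξ : ℝ) :
    Continuous (hatx A B g ξ) := by
  unfold hatx
  apply intervalIntegral.continuous_parametric_intervalIntegral_of_continuous'
  unfold Function.uncurry
  fun_prop

lemma hatx_add (A B : ℝ) {g h : ℝ × ℝ → ℂ} (hg : Continuous g) (hh : Continuous h) (ξ t : ℝ) :
    hatx A B (g + h) ξ t = hatx A B g ξ t + hatx A B h ξ t := by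
  unfold hatx
  rw [← intervalIntegral.integral_add]
  · simp [mul_add]
  · apply Continuous.intervalIntegrable; fun_prop
  · apply Continuous.intervalIntegrable; fun_prop

lemma hatx_smul (A B : ℝ) (z : ℂ) (g : ℝ × ℝ → ℂ) (ξ t : ℝ) :
    hatx A B (z • g) ξ t = z * hatx A B g ξ t := by
  unfold hatx
  rw [← intervalIntegral.integral_const_mul]
  congr 1; ext x; simp; ring

lemma hatx_zero_of (A B : ℝ) {g : ℝ × ℝ → ℂ} (ξ t : ℝ) (h : ∀ x, g (x, t) = 0) :
    hatx A B g ξ t = 0 := by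
  simp [hatx, h]

lemma hs_congr {f g : ℤ → ℝ} {a b : ℝ} (h : HasSum f a) (e1 : ∀ m, g m = f m) (e2 : b = a) :
    HasSum g b := by
  obtain rfl : g = f := funext e1
  rw [e2]; exact h

lemma parseval1 (A B : ℝ) (hAB : A < B) {g : ℝ × ℝ → ℂ} (hg : Continuous g) (σ t : ℝ) :
    HasSum (fun m : ℤ => ‖hatx A B g (2 * π * m / (B - A) + σ) t‖ ^ 2)
      ((B - A) * ∫ x in A..B, ‖g (x, t)‖ ^ 2) := by
  have hBA : 0 < B - A := by linarith
  set f : ℝ → ℂ := fun x => Complex.exp (-(Complex.I * σ * x)) * g (x, t) with hf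
  have hfc : Continuous f := by fun_prop
  have hmem : MemLp f 2 (volume.restrict (Set.Ioc A B)) := by
    obtain ⟨C, hC⟩ := isCompact_Icc.exists_bound_of_continuousOn (hfc.continuousOn (s := Set.Icc A B))
    refine MemLp.of_bound hfc.aestronglyMeasurable C ?_
    filter_upwards [ae_restrict_mem measurableSet_Ioc] with x hx
    exact hC x (Set.Ioc_subset_Icc_self hx)
  have h := (hasSum_sq_fourierCoeffOn hAB hmem).mul_left ((B - A) ^ 2)
  have hnorm : ∀ x, ‖f x‖ = ‖g (x, t)‖ := by
    intro x
    simp only [hf, norm_mul]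
    rw [show -(Complex.I * σ * x) = ((-(σ * x) : ℝ) : ℂ) * Complex.I by push_cast; ring,
      Complex.norm_exp_ofReal_mul_I, one_mul]
  refine hs_congr h ?_ ?_
  · intro m
    rw [fourierCoeffOn_eq_integral, norm_smul, mul_pow, ← mul_assoc, ← mul_pow, Real.norm_eq_abs,
      abs_of_pos (by positivity : 0 < 1 / (B - A)), mul_one_div_cancel hBA.ne', one_pow, one_mul]
    unfold hatx
    congr 2
    apply intervalIntegral.integral_congr
    intro x _
    simp only [fourier_coe_apply, hf, smul_eq_mul]
    rw [← mul_assoc, ← Complex.exp_add]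
    congr 2
    push_cast
    have : (B - A : ℂ) ≠ 0 := by exact_mod_cast hBA.ne'
    field_simp
    ring
  · simp only [hnorm, smul_eq_mul]
    field_simp

/-- continuous functions vanishing outside the rectangle -/
def SuppIn (A B D E : ℝ) (g : ℝ × ℝ → ℂ) : Prop :=
  Continuous g ∧ ∀ p, p ∉ Set.Ioo A B ×ˢ Set.Ioo D E → g p = 0

lemma SuppIn.hat0 {A B D E : ℝ} {g : ℝ × ℝ → ℂ} (hg : SuppIn A B D E g) (ξ t : ℝ)
    (ht : t ∉ Set.Ioo D E) : hatx A B g ξ t = 0 :=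
  hatx_zero_of A B ξ t fun _ => hg.2 _ fun h => ht h.2

lemma SuppIn.hcs {A B D E : ℝ} {g : ℝ × ℝ → ℂ} (hg : SuppIn A B D E g) (ξ : ℝ) :
    HasCompactSupport (hatx A B g ξ) := by
  refine HasCompactSupport.of_support_subset_isCompact (isCompact_Icc (a := D) (b := E)) ?_
  intro t ht
  by_contra hcon
  exact ht (hg.hat0 ξ t fun h => hcon (Set.Ioo_subset_Icc_self h))

lemma SuppIn.hcs2 {A B D E : ℝ} {g : ℝ × ℝ → ℂ} (hg : SuppIn A B D E g) :
    HasCompactSupport g := by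
  refine HasCompactSupport.of_support_subset_isCompact
    ((isCompact_Icc (a := A) (b := B)).prod (isCompact_Icc (a := D) (b := E))) ?_
  intro t ht
  by_contra hcon
  exact ht (hg.2 _ fun h => hcon ⟨Set.Ioo_subset_Icc_self h.1, Set.Ioo_subset_Icc_self h.2⟩)

lemma SuppIn.intg {A B D E : ℝ} {g : ℝ × ℝ → ℂ} (hg : SuppIn A B D E g) :
    Integrable (fun p => ‖g p‖ ^ 2) := by
  have := hg.1
  refine Continuous.integrable_of_hasCompactSupport (by fun_prop) ?_
  exact hg.hcs2.norm.comp_left (g := fun x : ℝ => x ^ 2) (by simp)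

lemma parseval2 (A B D E : ℝ) (hAB : A < B) {g : ℝ × ℝ → ℂ} (hg : SuppIn A B D E g) (σ : ℝ) :
    HasSum (fun m : ℤ => ∫ t, ‖hatx A B g (2 * π * m / (B - A) + σ) t‖ ^ 2)
      ((B - A) * ∫ p in Set.Ioo A B ×ˢ Set.Ioo D E, ‖g p‖ ^ 2) := by
  have hgc := hg.1
  have hFc : Continuous fun t => (B - A) * ∫ x in A..B, ‖g (x, t)‖ ^ 2 := by
    apply Continuous.mul continuous_const
    apply intervalIntegral.continuous_parametric_intervalIntegral_of_continuous'
    unfold Function.uncurry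
    fun_prop
  have hF0 : ∀ t, t ∉ Set.Ioo D E → (∫ x in A..B, ‖g (x, t)‖ ^ 2) = 0 := by
    intro t ht
    have : ∀ x, g (x, t) = 0 := fun _ => hg.2 _ fun h => ht h.2
    simp [this]
  have hFs : HasCompactSupport fun t => (B - A) * ∫ x in A..B, ‖g (x, t)‖ ^ 2 := by
    refine HasCompactSupport.of_support_subset_isCompact (isCompact_Icc (a := D) (b := E)) ?_
    intro t ht
    by_contra hcon
    exact ht (by simp [hF0 t fun h => hcon (Set.Ioo_subset_Icc_self h)])
  have hc := fun m : ℤ => hatx_cont A B hgc (2 * π * m / (B - A) + σ)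
  have key := hasSum_integral_of_dominated_convergence (μ := volume)
    (F := fun (m : ℤ) t => ‖hatx A B g (2 * π * m / (B - A) + σ) t‖ ^ 2)
    (f := fun t => (B - A) * ∫ x in A..B, ‖g (x, t)‖ ^ 2)
    (fun (m : ℤ) t => ‖hatx A B g (2 * π * m / (B - A) + σ) t‖ ^ 2)
    (fun m => ((hc m).norm.pow 2).aestronglyMeasurable)
    (fun m => ae_of_all _ fun t => by simp)
    (ae_of_all _ fun t => (parseval1 A B hAB hgc σ t).summable)
    (by
      simp_rw [fun t => (parseval1 A B hAB hgc σ t).tsum_eq]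
      exact hFc.integrable_of_hasCompactSupport hFs)
    (ae_of_all _ fun t => parseval1 A B hAB hgc σ t)
  refine hs_congr key (fun m => rfl) ?_
  rw [integral_const_mul]
  congr 1
  have hi := hg.intg
  rw [Measure.volume_eq_prod, ← Measure.prod_restrict, integral_prod_symm]
  · rw [setIntegral_eq_integral_of_forall_compl_eq_zero]
    · congr 1; ext t
      rw [intervalIntegral.integral_of_le hAB.le, integral_Ioc_eq_integral_Ioo]
    · intro t ht
      have : ∀ x, g (x, t) = 0 := fun _ => hg.2 _ fun h => ht h.2
      simp [this]
  · rw [Measure.prod_restrict]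
    exact hi.integrableOn

lemma test_supp {A B D E : ℝ} {w : ℝ × ℝ → ℂ} (hw : IsTestOn (Set.Ioo A B ×ˢ Set.Ioo D E) w) :
    SuppIn A B D E w :=
  ⟨hw.1.continuous, fun _ hp => image_eq_zero_of_notMem_tsupport fun h => hp (hw.2.2 h)⟩

lemma test_fderiv {A B D E : ℝ} {w : ℝ × ℝ → ℂ} (hw : IsTestOn (Set.Ioo A B ×ˢ Set.Ioo D E) w)
    (v : ℝ × ℝ) : SuppIn A B D E (fun p => fderiv ℝ w p v) := by
  refine ⟨?_, fun p hp => ?_⟩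
  · exact (hw.1.continuous_fderiv (by simp)).clm_apply continuous_const
  · have : fderiv ℝ w p = 0 := by
      by_contra hne
      exact hp (hw.2.2 (support_fderiv_subset ℝ hne))
    simp [this]

lemma hatx_deriv {A B D E : ℝ} {w : ℝ × ℝ → ℂ} (hw : IsTestOn (Set.Ioo A B ×ˢ Set.Ioo D E) w)
    (ξ t : ℝ) : HasDerivAt (hatx A B w ξ) (hatx A B (dY w) ξ t) t := by
  have hd : SuppIn A B D E (dY w) := test_fderiv hw (0, 1)
  have hwc := hw.1.continuous
  have hdc := hd.1
  obtain ⟨C, hC⟩ := hd.hcs2.exists_bound_of_continuous hdc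
  refine (intervalIntegral.hasDerivAt_integral_of_dominated_loc_of_deriv_le
    (F := fun t x => Complex.exp (-(Complex.I * ξ * x)) * w (x, t))
    (F' := fun t x => Complex.exp (-(Complex.I * ξ * x)) * dY w (x, t))
    (bound := fun _ => C) (s := Set.univ) Filter.univ_mem ?_ ?_ ?_ ?_ ?_ ?_).2
  · refine Filter.Eventually.of_forall fun s => Continuous.aestronglyMeasurable (by fun_prop)
  · apply Continuous.intervalIntegrable; fun_prop
  · apply Continuous.aestronglyMeasurable; fun_prop
  · refine ae_of_all _ fun x _ s _ => ?_
    rw [norm_mul,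
      show -(Complex.I * ξ * x) = ((-(ξ * x) : ℝ) : ℂ) * Complex.I by push_cast; ring,
      Complex.norm_exp_ofReal_mul_I, one_mul]
    exact hC _
  · exact intervalIntegrable_const
  · refine ae_of_all _ fun x _ s _ => ?_
    apply HasDerivAt.const_mul
    have h1 : HasFDerivAt w (fderiv ℝ w (x, s)) (x, s) :=
      (hw.1.differentiable (by simp) _).hasFDerivAt
    have h2 : HasDerivAt (fun s : ℝ => (x, s)) (0, 1) s :=
      (hasDerivAt_const s x).prodMk (hasDerivAt_id s)
    exact h1.comp_hasDerivAt s h2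

lemma hatx_dX {A B D E : ℝ} {w : ℝ × ℝ → ℂ} (hw : IsTestOn (Set.Ioo A B ×ˢ Set.Ioo D E) w)
    (ξ t : ℝ) : hatx A B (dX w) ξ t = Complex.I * ξ * hatx A B w ξ t := by
  have hd : SuppIn A B D E (dX w) := test_fderiv hw (1, 0)
  have hs := test_supp hw
  have hwc := hw.1.continuous
  have hdc := hd.1
  have key := intervalIntegral.integral_eq_sub_of_hasDerivAt (a := A) (b := B)
    (f := fun x : ℝ => Complex.exp (-(Complex.I * ξ * x)) * w (x, t))
    (f' := fun x : ℝ => Complex.exp (-(Complex.I * ξ * x)) * dX w (x, t)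
      - Complex.I * ξ * (Complex.exp (-(Complex.I * ξ * x)) * w (x, t)))
    (by
      intro x _
      have h1 : HasFDerivAt w (fderiv ℝ w (x, t)) (x, t) :=
        (hw.1.differentiable (by simp) _).hasFDerivAt
      have h2 : HasDerivAt (fun s : ℝ => (s, t)) (1, 0) x :=
        (hasDerivAt_id x).prodMk (hasDerivAt_const x t)
      have h3 : HasDerivAt (fun x : ℝ => w (x, t)) (dX w (x, t)) x := h1.comp_hasDerivAt x h2
      have h4 : HasDerivAt (fun x : ℝ => Complex.exp (-(Complex.I * ξ * x)))
          (Complex.exp (-(Complex.I * ξ * x)) * -(Complex.I * ξ)) x := by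
        apply HasDerivAt.cexp
        have := (((hasDerivAt_id x).ofReal_comp).const_mul (Complex.I * ξ)).neg
        refine this.congr_deriv ?_
        simp
      refine (h4.mul h3).congr_deriv ?_
      ring)
    (by apply Continuous.intervalIntegrable; fun_prop)
  rw [intervalIntegral.integral_sub (by apply Continuous.intervalIntegrable; fun_prop)
    (by apply Continuous.intervalIntegrable; fun_prop), intervalIntegral.integral_const_mul,
    hs.2 (B, t) (fun h => lt_irrefl _ h.1.2), hs.2 (A, t) (fun h => lt_irrefl _ h.1.1)] at key
  simp only [mul_zero, sub_zero] at key
  exact sub_eq_zero.1 key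

/-- the frozen symbol -/
def Gop (κ t₀ b₀ : ℝ) (w : ℝ × ℝ → ℂ) (p : ℝ × ℝ) : ℂ :=
  κ * (-Complex.I * dX w p) + ((p.2 - t₀) * b₀ : ℝ) * w p

lemma Gop_supp {A B D E : ℝ} {w : ℝ × ℝ → ℂ} (hw : IsTestOn (Set.Ioo A B ×ˢ Set.Ioo D E) w)
    (κ t₀ b₀ : ℝ) : SuppIn A B D E (Gop κ t₀ b₀ w) := by
  have hd : SuppIn A B D E (dX w) := test_fderiv hw (1, 0)
  have hs := test_supp hw
  have hwc := hw.1.continuous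
  have hdc := hd.1
  refine ⟨by unfold Gop; fun_prop, fun p hp => ?_⟩
  simp [Gop, hd.2 p hp, hs.2 p hp]

lemma hatx_Gop {A B D E : ℝ} {w : ℝ × ℝ → ℂ} (hw : IsTestOn (Set.Ioo A B ×ˢ Set.Ioo D E) w)
    (κ t₀ b₀ ξ t : ℝ) :
    hatx A B (Gop κ t₀ b₀ w) ξ t = ((κ * ξ + (t - t₀) * b₀ : ℝ) : ℂ) * hatx A B w ξ t := by
  have hd : SuppIn A B D E (dX w) := test_fderiv hw (1, 0)
  have hwc := hw.1.continuous
  have hdc := hd.1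
  have h1 : hatx A B (Gop κ t₀ b₀ w) ξ t =
      hatx A B (((κ : ℂ) * -Complex.I) • dX w + (((t - t₀) * b₀ : ℝ) : ℂ) • w) ξ t := by
    unfold hatx
    congr 1; ext x; simp [Gop]; ring
  rw [h1, hatx_add A B (hdc.const_smul _) (hwc.const_smul _), hatx_smul, hatx_smul, hatx_dX hw]
  push_cast
  linear_combination (-(κ : ℂ) * ξ * hatx A B w ξ t) * Complex.I_sq

lemma energy_sum {A B D E : ℝ} (hAB : A < B) {w : ℝ × ℝ → ℂ}
    (hw : IsTestOn (Set.Ioo A B ×ˢ Set.Ioo D E) w) (κ t₀ b₀ σ : ℝ) :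
    HasSum (fun m : ℤ => ∫ t, (‖hatx A B (dY w) (2 * π * m / (B - A) + σ) t‖ ^ 2 +
        (κ * (2 * π * m / (B - A) + σ) + (t - t₀) * b₀) ^ 2 *
          ‖hatx A B w (2 * π * m / (B - A) + σ) t‖ ^ 2))
      ((B - A) * ((∫ p in Set.Ioo A B ×ˢ Set.Ioo D E, ‖Gop κ t₀ b₀ w p‖ ^ 2) +
        ∫ p in Set.Ioo A B ×ˢ Set.Ioo D E, ‖dY w p‖ ^ 2)) := by
  have hd : SuppIn A B D E (dY w) := test_fderiv hw (0, 1)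
  have hG := Gop_supp hw κ t₀ b₀
  have h1 := parseval2 A B D E hAB hd σ
  have h2 := parseval2 A B D E hAB hG σ
  have h3 := h1.add h2
  rw [mul_add, add_comm]
  refine hs_congr h3 (fun m => ?_) rfl
  set ξ := 2 * π * m / (B - A) + σ
  have e : ∀ t, (κ * ξ + (t - t₀) * b₀) ^ 2 * ‖hatx A B w ξ t‖ ^ 2 =
      ‖hatx A B (Gop κ t₀ b₀ w) ξ t‖ ^ 2 := by
    intro t
    rw [hatx_Gop hw, norm_mul, Complex.norm_real, mul_pow, Real.norm_eq_abs, sq_abs]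
  simp_rw [e]
  rw [integral_add]
  · exact int_cs (hd.hcs ξ) ((hatx_cont A B hd.1 ξ).norm.pow 2) (by intro t h; simp [h])
  · exact int_cs (hG.hcs ξ) ((hatx_cont A B hG.1 ξ).norm.pow 2) (by intro t h; simp [h])

lemma norm_sq_sum_disj {n : ℕ} (a : Fin n → ℂ) (h : ∀ i j, i ≠ j → a i = 0 ∨ a j = 0) :
    ‖∑ j, a j‖ ^ 2 = ∑ j, ‖a j‖ ^ 2 := by
  by_cases h0 : ∀ j, a j = 0
  · simp [h0]
  · push Not at h0
    obtain ⟨j, hj⟩ := h0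
    have hz : ∀ i, i ≠ j → a i = 0 := fun i hi => (h i j hi).resolve_right hj
    rw [Finset.sum_eq_single j (fun i _ hi => hz i hi) (by simp),
      Finset.sum_eq_single j (fun i _ hi => by simp [hz i hi]) (by simp)]

/-- tiled mode function -/
def tile (A B T κ b₀ : ℝ) {n : ℕ} (v : Fin n → ℝ × ℝ → ℂ) (ξ t : ℝ) : ℂ :=
  ∑ j, hatx A B (v j) (ξ + κ⁻¹ * (j : ℕ) * T * b₀) (t - (j : ℕ) * T)

lemma tile_sq {A B D T : ℝ} (hT : 0 < T) (κ b₀ : ℝ) {n : ℕ} (v : Fin n → ℝ × ℝ → ℂ)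
    (hv : ∀ j, SuppIn A B D (D + T) (v j)) (ξ t : ℝ) :
    ‖tile A B T κ b₀ v ξ t‖ ^ 2 =
      ∑ j : Fin n, ‖hatx A B (v j) (ξ + κ⁻¹ * (j : ℕ) * T * b₀) (t - (j : ℕ) * T)‖ ^ 2 := by
  apply norm_sq_sum_disj
  intro i j hij
  by_contra hcon
  push Not at hcon
  have h1 : t - (i : ℕ) * T ∈ Set.Ioo D (D + T) := by
    by_contra h; exact hcon.1 ((hv i).hat0 _ _ h)
  have h2 : t - (j : ℕ) * T ∈ Set.Ioo D (D + T) := by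
    by_contra h; exact hcon.2 ((hv j).hat0 _ _ h)
  apply hij
  have e1 : ((i : ℕ) : ℝ) < (j : ℕ) + 1 := by
    have : ((i : ℕ) : ℝ) * T < ((j : ℕ) + 1) * T := by linarith [h1.1, h2.2]
    exact lt_of_mul_lt_mul_right this hT.le
  have e2 : ((j : ℕ) : ℝ) < (i : ℕ) + 1 := by
    have : ((j : ℕ) : ℝ) * T < ((i : ℕ) + 1) * T := by linarith [h2.1, h1.2]
    exact lt_of_mul_lt_mul_right this hT.le
  have e1' : (i : ℕ) < (j : ℕ) + 1 := by exact_mod_cast e1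
  have e2' : (j : ℕ) < (i : ℕ) + 1 := by exact_mod_cast e2
  exact Fin.ext (by omega)

lemma tile_zero {A B D T : ℝ} (hT : 0 < T) (κ b₀ : ℝ) {n : ℕ} (v : Fin n → ℝ × ℝ → ℂ)
    (hv : ∀ j, SuppIn A B D (D + T) (v j)) (ξ t : ℝ) (ht : t ∉ Set.Icc D (D + n * T)) :
    tile A B T κ b₀ v ξ t = 0 := by
  apply Finset.sum_eq_zero
  intro j _
  apply (hv j).hat0
  intro h
  apply ht
  have hj : (((j : ℕ) : ℝ) + 1) ≤ n := by exact_mod_cast j.2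
  have h0 : 0 ≤ ((j : ℕ) : ℝ) * T := by positivity
  have := mul_le_mul_of_nonneg_right hj hT.le
  exact ⟨by linarith [h.1], by linarith [h.2]⟩

lemma tile_cont {A B : ℝ} (T κ b₀ : ℝ) {n : ℕ} (v : Fin n → ℝ × ℝ → ℂ)
    (hv : ∀ j, Continuous (v j)) (ξ : ℝ) : Continuous (tile A B T κ b₀ v ξ) := by
  unfold tile
  refine continuous_finsetSum _ fun j _ => ?_
  exact (hatx_cont A B (hv j) _).comp (by fun_prop)

lemma tile_int {A B D T : ℝ} (hT : 0 < T) (κ b₀ t₀ : ℝ) (hκ : κ ≠ 0) {n : ℕ}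
    (v : Fin n → ℝ × ℝ → ℂ)
    (hv : ∀ j, IsTestOn (Set.Ioo A B ×ˢ Set.Ioo D (D + T)) (v j)) (ξ : ℝ) :
    (∫ t, ‖tile A B T κ b₀ v ξ t‖ ^ 2 =
      ∑ j : Fin n, ∫ t, ‖hatx A B (v j) (ξ + κ⁻¹ * (j : ℕ) * T * b₀) t‖ ^ 2) ∧
    (∫ t, (‖tile A B T κ b₀ (fun j => dY (v j)) ξ t‖ ^ 2 +
        (κ * ξ + (t - t₀) * b₀) ^ 2 * ‖tile A B T κ b₀ v ξ t‖ ^ 2) =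
      ∑ j : Fin n, ∫ t, (‖hatx A B (dY (v j)) (ξ + κ⁻¹ * (j : ℕ) * T * b₀) t‖ ^ 2 +
        (κ * (ξ + κ⁻¹ * (j : ℕ) * T * b₀) + (t - t₀) * b₀) ^ 2 *
          ‖hatx A B (v j) (ξ + κ⁻¹ * (j : ℕ) * T * b₀) t‖ ^ 2)) := by
  have hs := fun j => test_supp (hv j)
  have hd : ∀ j, SuppIn A B D (D + T) (dY (v j)) := fun j => test_fderiv (hv j) (0, 1)
  have i1 : ∀ (j : Fin n) (ζ : ℝ), Integrable fun t => ‖hatx A B (v j) ζ t‖ ^ 2 := fun j ζ =>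
    int_cs ((hs j).hcs ζ) ((hatx_cont A B (hs j).1 ζ).norm.pow 2) (by intro t h; simp [h])
  have i2 : ∀ (j : Fin n) (ζ : ℝ), Integrable fun t => (‖hatx A B (dY (v j)) ζ t‖ ^ 2 +
        (κ * ζ + (t - t₀) * b₀) ^ 2 * ‖hatx A B (v j) ζ t‖ ^ 2) := by
    intro j ζ
    have c1 := hatx_cont A B (hs j).1 ζ
    have c2 := hatx_cont A B (hd j).1 ζ
    refine Integrable.add ?_ ?_
    · exact int_cs ((hd j).hcs ζ) (c2.norm.pow 2) (by intro t h; simp [h])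
    · exact int_cs ((hs j).hcs ζ) (by fun_prop) (by intro t h; simp [h])
  constructor
  · simp_rw [tile_sq hT κ b₀ v hs]
    rw [integral_finsetSum]
    · refine Finset.sum_congr rfl fun j _ => ?_
      exact integral_sub_right_eq_self
        (fun t => ‖hatx A B (v j) (ξ + κ⁻¹ * (j : ℕ) * T * b₀) t‖ ^ 2) ((j : ℕ) * T)
    · intro j _
      exact (i1 j _).comp_sub_right ((j : ℕ) * T)
  · simp_rw [tile_sq hT κ b₀ v hs, tile_sq hT κ b₀ (fun j => dY (v j)) hd, Finset.mul_sum,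
      ← Finset.sum_add_distrib]
    have e : ∀ (j : Fin n) (t : ℝ), κ * ξ + (t - t₀) * b₀ =
        κ * (ξ + κ⁻¹ * (j : ℕ) * T * b₀) + ((t - (j : ℕ) * T) - t₀) * b₀ := by
      intro j t; field_simp; ring
    have e2 : ∀ (j : Fin n) (t : ℝ), 
        ‖hatx A B (dY (v j)) (ξ + κ⁻¹ * (j : ℕ) * T * b₀) (t - (j : ℕ) * T)‖ ^ 2 +
        (κ * ξ + (t - t₀) * b₀) ^ 2 *
          ‖hatx A B (v j) (ξ + κ⁻¹ * (j : ℕ) * T * b₀) (t - (j : ℕ) * T)‖ ^ 2 =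
        (fun s => ‖hatx A B (dY (v j)) (ξ + κ⁻¹ * (j : ℕ) * T * b₀) s‖ ^ 2 +
        (κ * (ξ + κ⁻¹ * (j : ℕ) * T * b₀) + (s - t₀) * b₀) ^ 2 *
          ‖hatx A B (v j) (ξ + κ⁻¹ * (j : ℕ) * T * b₀) s‖ ^ 2) (t - (j : ℕ) * T) := by
      intro j t; rw [e j t]
    simp_rw [e2]
    rw [integral_finsetSum]
    · refine Finset.sum_congr rfl fun j _ => ?_
      exact integral_sub_right_eq_self (μ := volume) (fun s : ℝ =>
        ‖hatx A B (dY (v j)) (ξ + κ⁻¹ * (j : ℕ) * T * b₀) s‖ ^ 2 +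
        (κ * (ξ + κ⁻¹ * (j : ℕ) * T * b₀) + (s - t₀) * b₀) ^ 2 *
          ‖hatx A B (v j) (ξ + κ⁻¹ * (j : ℕ) * T * b₀) s‖ ^ 2) ((j : ℕ) * T)
    · intro j _
      exact (i2 j _).comp_sub_right ((j : ℕ) * T)

lemma mode_ineq {A B D T : ℝ} (hT : 0 < T) (κ b₀ t₀ μ : ℝ) (hκ : κ ≠ 0) (hb : b₀ ≠ 0)
    {n : ℕ} (l : ℕ) (hμ : μ ≤ (2 * l + 1) * |b₀|)
    (v : Fin n → ℝ × ℝ → ℂ)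
    (hv : ∀ j, IsTestOn (Set.Ioo A B ×ˢ Set.Ioo D (D + T)) (v j)) (ξ : ℝ)
    (hor : (∀ k < l, ∫ t, ((t - (t₀ - κ * ξ / b₀)) ^ k *
        Real.exp (-(|b₀| * (t - (t₀ - κ * ξ / b₀)) ^ 2 / 2))) • tile A B T κ b₀ v ξ t = 0) ∨
      (∀ t ∈ Set.Icc D (D + n * T), μ ≤ (κ * ξ + (t - t₀) * b₀) ^ 2)) :
    μ * ∑ j : Fin n, ∫ t, ‖hatx A B (v j) (ξ + κ⁻¹ * (j : ℕ) * T * b₀) t‖ ^ 2 ≤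
      ∑ j : Fin n, ∫ t, (‖hatx A B (dY (v j)) (ξ + κ⁻¹ * (j : ℕ) * T * b₀) t‖ ^ 2 +
        (κ * (ξ + κ⁻¹ * (j : ℕ) * T * b₀) + (t - t₀) * b₀) ^ 2 *
          ‖hatx A B (v j) (ξ + κ⁻¹ * (j : ℕ) * T * b₀) t‖ ^ 2) := by
  obtain ⟨h1, h2⟩ := tile_int hT κ b₀ t₀ hκ v hv ξ
  rw [← h1, ← h2]
  have hs := fun j => test_supp (hv j)
  have hd : ∀ j, SuppIn A B D (D + T) (dY (v j)) := fun j => test_fderiv (hv j) (0, 1)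
  have c1 := tile_cont (A := A) (B := B) T κ b₀ v (fun j => (hs j).1) ξ
  have c2 := tile_cont (A := A) (B := B) T κ b₀ (fun j => dY (v j)) (fun j => (hd j).1) ξ
  have s1 : HasCompactSupport (tile A B T κ b₀ v ξ) := by
    refine HasCompactSupport.of_support_subset_isCompact
      (isCompact_Icc (a := D) (b := D + n * T)) ?_
    intro t ht
    by_contra hcon
    exact ht (tile_zero hT κ b₀ v hs ξ t hcon)
  have s2 : HasCompactSupport (tile A B T κ b₀ (fun j => dY (v j)) ξ) := by
    refine HasCompactSupport.of_support_subset_isCompact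
      (isCompact_Icc (a := D) (b := D + n * T)) ?_
    intro t ht
    by_contra hcon
    exact ht (tile_zero hT κ b₀ _ hd ξ t hcon)
  have hder : ∀ t, HasDerivAt (tile A B T κ b₀ v ξ)
      (tile A B T κ b₀ (fun j => dY (v j)) ξ t) t := by
    intro t
    unfold tile
    apply HasDerivAt.fun_sum
    intro j _
    exact (hatx_deriv (hv j) _ _).comp_sub_const t _
  have i1 : Integrable fun t => ‖tile A B T κ b₀ v ξ t‖ ^ 2 :=
    int_cs s1 (by fun_prop) (by intro t h; simp [h])
  have i2 : Integrable fun t => ‖tile A B T κ b₀ (fun j => dY (v j)) ξ t‖ ^ 2 :=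
    int_cs s2 (by fun_prop) (by intro t h; simp [h])
  have i3 : Integrable fun t => (κ * ξ + (t - t₀) * b₀) ^ 2 * ‖tile A B T κ b₀ v ξ t‖ ^ 2 :=
    int_cs s1 (by fun_prop) (by intro t h; simp [h])
  have pos : 0 ≤ ∫ t, ‖tile A B T κ b₀ v ξ t‖ ^ 2 := integral_nonneg fun t => by positivity
  rcases hor with hm | hfar
  · have := harm |b₀| (t₀ - κ * ξ / b₀) (abs_pos.2 hb) l _ _ hder c2 s1 hm
    refine (mul_le_mul_of_nonneg_right hμ pos).trans (this.trans_eq ?_)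
    congr 1; ext t
    rw [sq_abs]
    congr 2
    field_simp; ring
  · rw [← integral_const_mul]
    refine integral_mono (i1.const_mul μ) (i2.add i3) fun t => ?_
    simp only [Pi.add_apply]
    by_cases ht : t ∈ Set.Icc D (D + n * T)
    · have := mul_le_mul_of_nonneg_right (hfar t ht) (sq_nonneg ‖tile A B T κ b₀ v ξ t‖)
      have := sq_nonneg ‖tile A B T κ b₀ (fun j => dY (v j)) ξ t‖
      linarith
    · rw [tile_zero hT κ b₀ v hs ξ t ht]
      simp
      

lemma tile_lin {A B D T : ℝ} (κ b₀ : ℝ) {n : ℕ}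
    (V : Submodule ℂ (ℝ × ℝ → ℂ))
    (hV : ∀ u ∈ V, IsTestOn (Set.Ioo A B ×ˢ Set.Ioo D (D + T)) u) (z : ℂ)
    (v w : Fin n → V) (ξ t : ℝ) :
    tile A B T κ b₀ (fun j => ((z • v + w) j : ℝ × ℝ → ℂ)) ξ t =
      z * tile A B T κ b₀ (fun j => (v j : ℝ × ℝ → ℂ)) ξ t +
       tile A B T κ b₀ (fun j => (w j : ℝ × ℝ → ℂ)) ξ t := by
  unfold tile
  rw [Finset.mul_sum, ← Finset.sum_add_distrib]
  refine Finset.sum_congr rfl fun j _ => ?_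
  have c1 := (hV _ (v j).2).1.continuous
  have c2 := (hV _ (w j).2).1.continuous
  rw [← hatx_smul, ← hatx_add A B (c1.const_smul z) c2]
  rfl

/-- dimension bound for the tiled problem -/
lemma tile_count {A B D T : ℝ} (hAB : A < B) (hT : 0 < T) (κ b₀ t₀ μ : ℝ) (hκ : κ ≠ 0)
    (hb : b₀ ≠ 0) (n : ℕ) (l : ℕ) (hμ : μ ≤ (2 * l + 1) * |b₀|)
    (V : Submodule ℂ (ℝ × ℝ → ℂ)) [FiniteDimensional ℂ V]
    (hV : ∀ u ∈ V, IsTestOn (Set.Ioo A B ×ˢ Set.Ioo D (D + T)) u)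
    (hq : ∀ u ∈ V, u ≠ 0 → (∫ p in Set.Ioo A B ×ˢ Set.Ioo D (D + T), ‖Gop κ t₀ b₀ u p‖ ^ 2) +
        (∫ p in Set.Ioo A B ×ˢ Set.Ioo D (D + T), ‖dY u p‖ ^ 2) <
        μ * ∫ p in Set.Ioo A B ×ˢ Set.Ioo D (D + T), ‖u p‖ ^ 2)
    (M : Finset ℤ)
    (hM : ∀ m : ℤ, m ∉ M → ∀ t ∈ Set.Icc D (D + n * T),
      μ ≤ (κ * (2 * π * m / (B - A)) + (t - t₀) * b₀) ^ 2) :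
    n * Module.finrank ℂ V ≤ M.card * l := by
  by_contra hlt
  push Not at hlt
  let W : ℤ → ℕ → ℝ → ℝ := fun m k t =>
    (t - (t₀ - κ * (2 * π * m / (B - A)) / b₀)) ^ k *
        Real.exp (-(|b₀| * (t - (t₀ - κ * (2 * π * m / (B - A)) / b₀)) ^ 2 / 2))
  have hWc : ∀ m k, Continuous (W m k) := by intro m k; simp only [W]; fun_prop
  have hint : ∀ (m : ℤ) (k : ℕ) (v : Fin n → V), Integrable fun t => W m k t •
      tile A B T κ b₀ (fun j => (v j : ℝ × ℝ → ℂ)) (2 * π * m / (B - A)) t := by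
    intro m k v
    have hs := fun j => test_supp (hV _ (v j).2)
    have c1 := tile_cont (A := A) (B := B) T κ b₀ (fun j => (v j : ℝ × ℝ → ℂ))
      (fun j => (hs j).1) (2 * π * m / (B - A))
    refine int_cs (f := tile A B T κ b₀ (fun j => (v j : ℝ × ℝ → ℂ)) (2 * π * m / (B - A))) ?_
      ((hWc m k).smul c1) (by intro t h; simp [h])
    refine HasCompactSupport.of_support_subset_isCompact
      (isCompact_Icc (a := D) (b := D + n * T)) ?_
    intro t ht
    by_contra hcon
    exact ht (tile_zero hT κ b₀ _ hs _ t hcon)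
  let Φ : ℤ → ℕ → (Fin n → V) → ℂ := fun m k v => ∫ t, W m k t •
      tile A B T κ b₀ (fun j => (v j : ℝ × ℝ → ℂ)) (2 * π * m / (B - A)) t
  have hΦ : ∀ m k z v w, Φ m k (z • v + w) = z * Φ m k v + Φ m k w := by
    intro m k z v w
    simp only [Φ]
    simp_rw [tile_lin κ b₀ V hV z v w]
    rw [← integral_const_mul, ← integral_add ((hint m k v).const_mul z) (hint m k w)]
    congr 1; ext t
    simp only [Complex.real_smul]; ring
  have hΦ0 : ∀ m k, Φ m k 0 = 0 := by
    intro m k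
    have := hΦ m k 1 0 0
    simpa using this
  let Ψ : (Fin n → V) →ₗ[ℂ] (M × Fin l → ℂ) :=
    { toFun := fun v mk => Φ mk.1 mk.2 v
      map_add' := by
        intro v w; ext mk
        have := hΦ mk.1 mk.2 1 v w
        simpa using this
      map_smul' := by
        intro z v; ext mk
        have := hΦ mk.1 mk.2 z v 0
        simpa [hΦ0] using this }
  have hker : Ψ.ker ≠ ⊥ := by
    apply LinearMap.ker_ne_bot_of_finrank_lt
    rw [Module.finrank_pi, Module.finrank_pi_fintype]
    simpa using hlt
  obtain ⟨v, hvk, hv0⟩ := Submodule.exists_mem_ne_zero_of_ne_bot hker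
  have hvt := fun j => hV _ (v j).2
  have hmode : ∀ m : ℤ, μ * ∑ j : Fin n, ∫ t, ‖hatx A B (v j) (2 * π * m / (B - A) + κ⁻¹ * (j : ℕ) * T * b₀) t‖ ^ 2 ≤
      ∑ j : Fin n, ∫ t, (‖hatx A B (dY (v j)) (2 * π * m / (B - A) + κ⁻¹ * (j : ℕ) * T * b₀) t‖ ^ 2 +
        (κ * (2 * π * m / (B - A) + κ⁻¹ * (j : ℕ) * T * b₀) + (t - t₀) * b₀) ^ 2 *
          ‖hatx A B (v j) (2 * π * m / (B - A) + κ⁻¹ * (j : ℕ) * T * b₀) t‖ ^ 2) := by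
    intro m
    apply mode_ineq hT κ b₀ t₀ μ hκ hb l hμ (fun j => (v j : ℝ × ℝ → ℂ)) hvt
    by_cases hm : m ∈ M
    · left
      intro k hk
      exact congrFun (LinearMap.mem_ker.1 hvk) (⟨m, hm⟩, ⟨k, hk⟩)
    · right
      exact hM m hm
  have S1 := hasSum_sum (s := Finset.univ) fun (j : Fin n) _ =>
    parseval2 A B D (D + T) hAB (test_supp (hvt j)) (κ⁻¹ * (j : ℕ) * T * b₀)
  have S2 := hasSum_sum (s := Finset.univ) fun (j : Fin n) _ =>
    energy_sum hAB (hvt j) κ t₀ b₀ (κ⁻¹ * (j : ℕ) * T * b₀)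
  have hle := hasSum_le hmode (S1.mul_left μ) S2
  rw [Finset.mul_sum] at hle
  obtain ⟨j0, hj0⟩ : ∃ j, v j ≠ 0 := by
    by_contra h; push Not at h; exact hv0 (funext h)
  have hBA : 0 < B - A := by linarith
  have hstrict : ∀ j, v j ≠ 0 → (B - A) * ((∫ p in Set.Ioo A B ×ˢ Set.Ioo D (D + T), ‖Gop κ t₀ b₀ (v j) p‖ ^ 2) +
        ∫ p in Set.Ioo A B ×ˢ Set.Ioo D (D + T), ‖dY (v j) p‖ ^ 2) < μ * ((B - A) * ∫ p in Set.Ioo A B ×ˢ Set.Ioo D (D + T), ‖(v j : ℝ × ℝ → ℂ) p‖ ^ 2) := by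
    intro j hj
    have h1 := hq _ (v j).2 (by simpa using hj)
    have := mul_lt_mul_of_pos_left h1 hBA
    linarith
  refine absurd hle (not_le.2 ?_)
  apply Finset.sum_lt_sum
  · intro j _
    by_cases hj : v j = 0
    · have d1 : ∀ p, dY (0 : ℝ × ℝ → ℂ) p = 0 := by intro p; simp [dY]
      have d2 : ∀ p, dX (0 : ℝ × ℝ → ℂ) p = 0 := by intro p; simp [dX]
      simp [hj, Gop, d1, d2]
    · exact (hstrict j hj).le
  · exact ⟨j0, Finset.mem_univ _, hstrict j0 hj0⟩

lemma landau_count {A B D T : ℝ} (hAB : A < B) (hT : 0 < T) (κ b₀ t₀ μ : ℝ) (hκ : 0 < κ)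
    (hb : b₀ ≠ 0) (l : ℕ) (hμ : μ ≤ (2 * l + 1) * |b₀|)
    (V : Submodule ℂ (ℝ × ℝ → ℂ)) [FiniteDimensional ℂ V]
    (hV : ∀ u ∈ V, IsTestOn (Set.Ioo A B ×ˢ Set.Ioo D (D + T)) u)
    (hq : ∀ u ∈ V, u ≠ 0 → (∫ p in Set.Ioo A B ×ˢ Set.Ioo D (D + T), ‖Gop κ t₀ b₀ u p‖ ^ 2) +
        (∫ p in Set.Ioo A B ×ˢ Set.Ioo D (D + T), ‖dY u p‖ ^ 2) <
        μ * ∫ p in Set.Ioo A B ×ˢ Set.Ioo D (D + T), ‖u p‖ ^ 2) :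
    (Module.finrank ℂ V : ℝ) ≤ T * (B - A) * |b₀| / (2 * π * κ) * l := by
  have hBA : 0 < B - A := by linarith
  have hβ : 0 < |b₀| := abs_pos.2 hb
  set δ : ℝ := 2 * π * κ / ((B - A) * |b₀|) with hδ
  have hδpos : 0 < δ := by positivity
  set δ' : ℝ := 2 * π * κ / ((B - A) * b₀) with hδ'
  have hδabs : |δ'| = δ := by
    rw [hδ', abs_div, abs_mul (B - A) b₀, abs_of_pos hBA, abs_of_pos (by positivity : 0 < 2 * π * κ)]
  have hδ'0 : δ' ≠ 0 := by
    intro h; rw [h, abs_zero] at hδabs; exact hδpos.ne hδabs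
  set R : ℝ := √(max μ 0) / |b₀| with hR
  have hR0 : 0 ≤ R := by positivity
  have main : ∀ n : ℕ, (n : ℝ) * Module.finrank ℂ V ≤ ((n * T + 2 * R) / δ + 1) * l := by
    intro n
    set z : ℝ := t₀ - D - n * T / 2 with hz
    set H : ℝ := n * T / 2 + R with hH
    have hH0 : 0 ≤ H := by positivity
    have := tile_count hAB hT κ b₀ t₀ μ hκ.ne' hb n l hμ V hV hq
      (Finset.Icc ⌈z / δ' - H / δ⌉ ⌊z / δ' + H / δ⌋) (by
        intro m hm t ht
        have h1 : H / δ < |(m : ℝ) - z / δ'| := by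
          by_contra hcon
          push Not at hcon
          rw [abs_le] at hcon
          apply hm
          rw [Finset.mem_Icc]
          exact ⟨Int.ceil_le.2 (by linarith [hcon.1]), Int.le_floor.2 (by linarith [hcon.2])⟩
        have h2 : H < |m * δ' - z| := by
          have : m * δ' - z = (m - z / δ') * δ' := by field_simp
          rw [this, abs_mul, hδabs]
          exact (div_lt_iff₀ hδpos).1 h1
        have h3 : R ≤ |m * δ' + (t - t₀)| := by
          have e : m * δ' - z = (m * δ' + (t - t₀)) - (t - D - n * T / 2) := by rw [hz]; ring
          have e2 : |t - D - n * T / 2| ≤ n * T / 2 := by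
            rw [abs_le]; exact ⟨by linarith [ht.1], by linarith [ht.2]⟩
          have e3 := abs_sub (m * δ' + (t - t₀)) (t - D - n * T / 2)
          rw [← e] at e3
          linarith
        have h4 : κ * (2 * π * m / (B - A)) + (t - t₀) * b₀ = (m * δ' + (t - t₀)) * b₀ := by
          rw [hδ']; field_simp
        rw [h4, mul_pow, ← sq_abs, ← sq_abs b₀]
        calc μ ≤ max μ 0 := le_max_left _ _
          _ = (R * |b₀|) ^ 2 := by
            rw [hR, div_mul_cancel₀ _ hβ.ne', Real.sq_sqrt (le_max_right _ _)]
          _ = R ^ 2 * |b₀| ^ 2 := by ring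
          _ ≤ _ := by gcongr)
    have h5 : (n : ℝ) * Module.finrank ℂ V ≤
        ((Finset.Icc ⌈z / δ' - H / δ⌉ ⌊z / δ' + H / δ⌋).card : ℝ) * l := by exact_mod_cast this
    refine h5.trans (mul_le_mul_of_nonneg_right ?_ (Nat.cast_nonneg l))
    rw [Int.card_Icc]
    have h6 : (n * T + 2 * R) / δ + 1 = 2 * (H / δ) + 1 := by rw [hH]; ring
    rw [h6]
    have h7 : (((⌊z / δ' + H / δ⌋ + 1 - ⌈z / δ' - H / δ⌉).toNat : ℕ) : ℝ) =
      ((max (⌊z / δ' + H / δ⌋ + 1 - ⌈z / δ' - H / δ⌉) 0 : ℤ) : ℝ) := by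
      rw [← Int.toNat_eq_max]; rfl
    rw [h7]
    push_cast
    apply max_le
    · linarith [Int.floor_le (z / δ' + H / δ), Int.le_ceil (z / δ' - H / δ)]
    · positivity
  have e : T * (B - A) * |b₀| / (2 * π * κ) = T / δ := by rw [hδ]; field_simp
  rw [e]
  by_contra hcon
  push Not at hcon
  obtain ⟨n, hn⟩ := exists_nat_gt ((2 * R / δ + 1) * l / (Module.finrank ℂ V - T / δ * l))
  rw [div_lt_iff₀ (by linarith)] at hn
  have := main n
  have e2 : ((n * T + 2 * R) / δ + 1) * l = n * (T / δ * l) + (2 * R / δ + 1) * l := by ring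
  rw [e2] at this
  linarith

lemma isOpen_UHP : IsOpen UHP := isOpen_lt continuous_const continuous_snd

lemma fieldB_contDiffOn {A₁ A₂ : ℝ × ℝ → ℝ} (h1 : ContDiffOn ℝ 2 A₁ UHP)
    (h2 : ContDiffOn ℝ 2 A₂ UHP) : ContDiffOn ℝ 1 (fieldB A₁ A₂) UHP := by
  have k1 : ContDiffOn ℝ 1 (fderiv ℝ A₁) UHP :=
    h1.fderiv_of_isOpen isOpen_UHP (by norm_num)
  have k2 : ContDiffOn ℝ 1 (fderiv ℝ A₂) UHP :=
    h2.fderiv_of_isOpen isOpen_UHP (by norm_num)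
  unfold fieldB dXr dYr
  exact (contDiff_snd.pow 2).contDiffOn.mul
    ((k2.clm_apply contDiffOn_const).sub (k1.clm_apply contDiffOn_const))

lemma fieldB_exp_cont {A₁ A₂ : ℝ × ℝ → ℝ} (h1 : ContDiffOn ℝ 2 A₁ UHP)
    (h2 : ContDiffOn ℝ 2 A₂ UHP) :
    Continuous fun p : ℝ × ℝ => fieldB A₁ A₂ (p.1, Real.exp p.2) :=
  (fieldB_contDiffOn h1 h2).continuousOn.comp_continuous (by fun_prop)
    (fun p => Real.exp_pos p.2)

lemma Atil_eq {A₁ A₂ : ℝ × ℝ → ℝ} (h1 : ContDiffOn ℝ 2 A₁ UHP)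
    (h2 : ContDiffOn ℝ 2 A₂ UHP) (t₀ : ℝ) (p : ℝ × ℝ) :
    Atil A₁ A₂ t₀ p = -∫ r in t₀..p.2, fieldB A₁ A₂ (p.1, Real.exp r) * Real.exp (-r) := by
  unfold Atil
  congr 1
  have hc : ContinuousOn (fun s => fieldB A₁ A₂ (p.1, s) / s ^ 2) (Set.Ioi 0) := by
    refine ContinuousOn.div ?_ (by fun_prop) (fun s hs => (pow_pos hs 2).ne')
    exact (fieldB_contDiffOn h1 h2).continuousOn.comp (by fun_prop) (fun s hs => hs)
  have := intervalIntegral.integral_comp_mul_deriv'' (a := t₀) (b := p.2) (f := Real.exp)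
    (f' := Real.exp) (g := fun s => fieldB A₁ A₂ (p.1, s) / s ^ 2)
    Real.continuous_exp.continuousOn
    (fun x _ => (Real.hasDerivAt_exp x).hasDerivWithinAt)
    Real.continuous_exp.continuousOn
    (hc.mono (by rintro _ ⟨x, _, rfl⟩; exact Real.exp_pos x))
  rw [← this]
  refine intervalIntegral.integral_congr fun r _ => ?_
  simp only [Function.comp]
  rw [Real.exp_neg]
  have := Real.exp_ne_zero r
  field_simp

lemma Atil_cont {A₁ A₂ : ℝ × ℝ → ℝ} (h1 : ContDiffOn ℝ 2 A₁ UHP)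
    (h2 : ContDiffOn ℝ 2 A₂ UHP) (t₀ : ℝ) : Continuous (Atil A₁ A₂ t₀) := by
  have e : Atil A₁ A₂ t₀ = fun p =>
    -∫ r in t₀..p.2, fieldB A₁ A₂ (p.1, Real.exp r) * Real.exp (-r) :=
    funext (Atil_eq h1 h2 t₀)
  rw [e]
  have hc := fieldB_exp_cont h1 h2
  refine Continuous.neg ?_
  refine intervalIntegral.continuous_parametric_intervalIntegral_of_continuous
    (f := fun (p : ℝ × ℝ) r => fieldB A₁ A₂ (p.1, Real.exp r) * Real.exp (-r)) ?_ continuous_snd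
  have : Continuous fun q : (ℝ × ℝ) × ℝ => fieldB A₁ A₂ (q.1.1, Real.exp q.2) :=
    hc.comp (g := fun p : ℝ × ℝ => fieldB A₁ A₂ (p.1, Real.exp p.2))
      (f := fun q : (ℝ × ℝ) × ℝ => (q.1.1, q.2)) (by fun_prop)
  exact this.mul (by fun_prop)

lemma exp_sub_one_le {u e : ℝ} (hu : |u| ≤ e / 2) (he : e ≤ 1) : |Real.exp u - 1| ≤ e := by
  have := Real.abs_exp_sub_one_le (x := u) (by linarith)
  linarith

lemma field_var {C₀ a₀ : ℝ} (hC₀ : 0 < C₀) (ha₀ : 1 < a₀) {A₁ A₂ : ℝ × ℝ → ℝ}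
    (h1 : ContDiffOn ℝ 2 A₁ UHP) (h2 : ContDiffOn ℝ 2 A₂ UHP) (hH : H2 C₀ A₁ A₂)
    {ε x₀ t₀ x r : ℝ} (hε : 0 < ε) (hε2 : ε ≤ 1 / 2)
    (hK : 2 * C₀ * (a₀ + 1) * ε ≤ 1)
    (hβ : 1 ≤ |fieldB A₁ A₂ (x₀, Real.exp t₀)|)
    (hx : |x - x₀| ≤ ε * a₀ * Real.exp t₀) (hr : |r - t₀| ≤ ε / 2) :
    |fieldB A₁ A₂ (x, Real.exp r) - fieldB A₁ A₂ (x₀, Real.exp t₀)| ≤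
      8 * C₀ * (a₀ + 1) * ε * |fieldB A₁ A₂ (x₀, Real.exp t₀)| := by
  set b₀ := fieldB A₁ A₂ (x₀, Real.exp t₀) with hb₀
  set y₀ := Real.exp t₀ with hy₀
  set y := Real.exp r with hy
  have hy0 : 0 < y₀ := Real.exp_pos _
  have hyy : |y - y₀| ≤ ε * y₀ := by
    have e : y - y₀ = y₀ * (Real.exp (r - t₀) - 1) := by
      rw [mul_sub, hy₀, ← Real.exp_add]; simp [hy]
    rw [e, abs_mul, abs_of_pos hy0, mul_comm]
    exact mul_le_mul_of_nonneg_right (exp_sub_one_le hr (by linarith)) hy0.le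
  set γ : ℝ → ℝ × ℝ := fun s => (x₀, y₀) + s • (x - x₀, y - y₀) with hγ
  have hγd : ∀ s, HasDerivAt γ (x - x₀, y - y₀) s := by
    intro s
    have := ((hasDerivAt_id s).smul_const (x - x₀, y - y₀)).const_add (x₀, y₀)
    refine this.congr_deriv ?_
    simp
  have hγ2 : ∀ s ∈ Set.Icc (0 : ℝ) 1, y₀ / 2 ≤ (γ s).2 := by
    intro s hs
    have e : (γ s).2 = y₀ + s * (y - y₀) := by simp [hγ]
    have : |s * (y - y₀)| ≤ y₀ / 2 := by
      rw [abs_mul, abs_of_nonneg hs.1]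
      have : s * |y - y₀| ≤ 1 * |y - y₀| := mul_le_mul_of_nonneg_right hs.2 (abs_nonneg _)
      have : ε * y₀ ≤ 1 / 2 * y₀ := mul_le_mul_of_nonneg_right hε2 hy0.le
      linarith
    rw [e]; linarith [(abs_le.1 this).1]
  have hdiff : ∀ s ∈ Set.Icc (0 : ℝ) 1, HasFDerivAt (fieldB A₁ A₂)
      (fderiv ℝ (fieldB A₁ A₂) (γ s)) (γ s) := by
    intro s hs
    have hm : γ s ∈ UHP := lt_of_lt_of_le (half_pos hy0) (hγ2 s hs)
    exact (((fieldB_contDiffOn h1 h2).differentiableOn (by norm_num)).differentiableAt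
      (isOpen_UHP.mem_nhds hm)).hasFDerivAt
  set K := 2 * C₀ * (a₀ + 1) * ε with hKdef
  have hK0 : 0 < K := by positivity
  have hfd : ∀ s ∈ Set.Icc (0 : ℝ) 1, HasDerivAt (fun s => fieldB A₁ A₂ (γ s) - b₀)
      (fderiv ℝ (fieldB A₁ A₂) (γ s) (x - x₀, y - y₀)) s := by
    intro s hs
    exact ((hdiff s hs).comp_hasDerivAt s (hγd s)).sub_const b₀
  have hbd : ∀ s ∈ Set.Ico (0 : ℝ) 1, ‖fderiv ℝ (fieldB A₁ A₂) (γ s) (x - x₀, y - y₀)‖ ≤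
      K * ‖fieldB A₁ A₂ (γ s) - b₀‖ + K * (|b₀| + 1) := by
    intro s hs
    have hs' : s ∈ Set.Icc (0 : ℝ) 1 := ⟨hs.1, hs.2.le⟩
    have hm : γ s ∈ UHP := lt_of_lt_of_le (half_pos hy0) (hγ2 s hs')
    have hH' := hH _ hm
    set P := dXr (fieldB A₁ A₂) (γ s) with hP
    set Q := dYr (fieldB A₁ A₂) (γ s) with hQ
    have e : fderiv ℝ (fieldB A₁ A₂) (γ s) (x - x₀, y - y₀) = (x - x₀) * P + (y - y₀) * Q := by
      have : ((x - x₀, y - y₀) : ℝ × ℝ) = (x - x₀) • (1, 0) + (y - y₀) • (0, 1) := by simp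
      rw [this, map_add, map_smul, map_smul]; rfl
    have hP' : |P| ≤ √(P ^ 2 + Q ^ 2) := Real.abs_le_sqrt (by nlinarith [sq_nonneg Q])
    have hQ' : |Q| ≤ √(P ^ 2 + Q ^ 2) := Real.abs_le_sqrt (by nlinarith [sq_nonneg P])
    set S := √(P ^ 2 + Q ^ 2) with hS
    have hS0 : 0 ≤ S := Real.sqrt_nonneg _
    set F := fieldB A₁ A₂ (γ s) with hF
    have hFb : |F| ≤ |F - b₀| + |b₀| := by
      have := abs_add_le (F - b₀) b₀; simpa using this
    have h3 : y₀ / 2 * S ≤ C₀ * (|F| + 1) :=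
      (mul_le_mul_of_nonneg_right (hγ2 s hs') hS0).trans hH'
    rw [e, Real.norm_eq_abs, Real.norm_eq_abs]
    have h4 : |(x - x₀) * P + (y - y₀) * Q| ≤ (ε * a₀ * y₀) * S + (ε * y₀) * S := by
      refine (abs_add_le _ _).trans ?_
      rw [abs_mul, abs_mul]
      exact add_le_add (mul_le_mul hx hP' (abs_nonneg _) (by positivity))
        (mul_le_mul hyy hQ' (abs_nonneg _) (by positivity))
    calc _ ≤ _ := h4
      _ = 2 * ε * (a₀ + 1) * (y₀ / 2 * S) := by ring
      _ ≤ 2 * ε * (a₀ + 1) * (C₀ * (|F - b₀| + |b₀| + 1)) := by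
        refine mul_le_mul_of_nonneg_left (h3.trans ?_) (by positivity)
        exact mul_le_mul_of_nonneg_left (by linarith) hC₀.le
      _ = _ := by rw [hKdef]; ring
  have hg := norm_le_gronwallBound_of_norm_deriv_right_le (δ := 0) (a := 0) (b := 1)
    (fun s hs => (hfd s hs).continuousAt.continuousWithinAt)
    (fun s hs => (hfd s ⟨hs.1, hs.2.le⟩).hasDerivWithinAt)
    (by simp [hγ, ← hb₀]) hbd 1 (by simp)
  rw [gronwallBound_of_K_ne_0 hK0.ne'] at hg
  have e1 : γ 1 = (x, y) := by simp [hγ]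
  rw [e1, Real.norm_eq_abs] at hg
  refine hg.trans ?_
  have hex := Real.abs_exp_sub_one_le (x := K) (by rw [abs_of_pos hK0]; exact hK)
  rw [abs_of_pos hK0] at hex
  have hex' := (abs_le.1 hex).2
  have : K * (|b₀| + 1) / K = |b₀| + 1 := by field_simp
  rw [this]
  simp only [sub_zero, mul_one, zero_mul, zero_add]
  have : (|b₀| + 1) * (Real.exp K - 1) ≤ (2 * |b₀|) * (2 * K) :=
    mul_le_mul (by linarith) hex' (by linarith [Real.add_one_le_exp K]) (by positivity)
  have e : (2 * |b₀|) * (2 * K) = 8 * C₀ * (a₀ + 1) * ε * |b₀| := by rw [hKdef]; ring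
  linarith

lemma pot_var {C₀ a₀ : ℝ} (hC₀ : 0 < C₀) (ha₀ : 1 < a₀) {A₁ A₂ : ℝ × ℝ → ℝ}
    (h1 : ContDiffOn ℝ 2 A₁ UHP) (h2 : ContDiffOn ℝ 2 A₂ UHP) (hH : H2 C₀ A₁ A₂)
    {ε x₀ t₀ x t : ℝ} (hε : 0 < ε) (hε2 : ε ≤ 1 / 2)
    (hK : 2 * C₀ * (a₀ + 1) * ε ≤ 1)
    (hβ : 1 ≤ |fieldB A₁ A₂ (x₀, Real.exp t₀)|)
    (hx : |x - x₀| ≤ ε * a₀ * Real.exp t₀) (ht : |t - t₀| ≤ ε / 2) :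
    Real.exp t₀ * |Atil A₁ A₂ t₀ (x, t) - Azero t₀ (fieldB A₁ A₂ (x₀, Real.exp t₀)) (x, t)| ≤
      (16 * C₀ * (a₀ + 1) + 1) * ε ^ 2 * |fieldB A₁ A₂ (x₀, Real.exp t₀)| := by
  set b₀ := fieldB A₁ A₂ (x₀, Real.exp t₀) with hb₀
  set κ := Real.exp t₀ with hκ
  have hκ0 : 0 < κ := Real.exp_pos _
  have hc : Continuous fun r => fieldB A₁ A₂ (x, Real.exp r) * Real.exp (-r) := by
    have : Continuous fun r : ℝ => fieldB A₁ A₂ (x, Real.exp r) :=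
      (fieldB_exp_cont h1 h2).comp (g := fun p : ℝ × ℝ => fieldB A₁ A₂ (p.1, Real.exp p.2))
        (f := fun r : ℝ => (x, r)) (by fun_prop)
    exact this.mul (by fun_prop)
  have e : κ * (Atil A₁ A₂ t₀ (x, t) - Azero t₀ b₀ (x, t)) =
      - ∫ r in t₀..t, (κ * (fieldB A₁ A₂ (x, Real.exp r) * Real.exp (-r)) - b₀) := by
    rw [Atil_eq h1 h2, intervalIntegral.integral_sub
      ((hc.const_mul κ).intervalIntegrable _ _) (by simp),
      intervalIntegral.integral_const_mul, intervalIntegral.integral_const]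
    simp only [Azero, smul_eq_mul]
    have : κ * Real.exp (-t₀) = 1 := by rw [hκ, ← Real.exp_add]; simp
    linear_combination ((t - t₀) * b₀) * this
  have hb : ∀ r ∈ Set.uIoc t₀ t, ‖κ * (fieldB A₁ A₂ (x, Real.exp r) * Real.exp (-r)) - b₀‖ ≤
      (16 * C₀ * (a₀ + 1) + 1) * ε * |b₀| := by
    intro r hr
    have hr' : |r - t₀| ≤ ε / 2 :=
      (Set.abs_sub_left_of_mem_uIcc (Set.uIoc_subset_uIcc hr)).trans ht
    have hv := field_var hC₀ ha₀ h1 h2 hH hε hε2 hK hβ hx hr'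
    rw [← hb₀] at hv
    set F := fieldB A₁ A₂ (x, Real.exp r)
    have hu : κ * Real.exp (-r) = Real.exp (-(r - t₀)) := by
      rw [hκ, ← Real.exp_add]; congr 1; ring
    have hu2 := exp_sub_one_le (u := -(r - t₀)) (by rwa [abs_neg]) (by linarith : ε ≤ 1)
    rw [← hu] at hu2
    set z := κ * Real.exp (-r)
    have hz : |z| ≤ 2 := by
      rw [abs_le] at hu2 ⊢; constructor <;> linarith [hu2.1, hu2.2]
    have e2 : κ * (F * Real.exp (-r)) - b₀ = z * (F - b₀) + (z - 1) * b₀ := by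
      simp only [z]; ring
    rw [e2, Real.norm_eq_abs]
    refine (abs_add_le _ _).trans ?_
    rw [abs_mul z, abs_mul (z - 1)]
    have k1 : |z| * |F - b₀| ≤ 2 * (8 * C₀ * (a₀ + 1) * ε * |b₀|) :=
      mul_le_mul hz hv (abs_nonneg _) (by norm_num)
    have k2 : |z - 1| * |b₀| ≤ ε * |b₀| := mul_le_mul_of_nonneg_right hu2 (abs_nonneg _)
    linarith
  have := intervalIntegral.norm_integral_le_of_norm_le_const hb
  rw [Real.norm_eq_abs] at this
  have e3 : κ * |Atil A₁ A₂ t₀ (x, t) - Azero t₀ b₀ (x, t)| =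
      |κ * (Atil A₁ A₂ t₀ (x, t) - Azero t₀ b₀ (x, t))| := by rw [abs_mul, abs_of_pos hκ0]
  rw [e3, e, abs_neg]
  refine this.trans ?_
  have : (16 * C₀ * (a₀ + 1) + 1) * ε * |b₀| * |t - t₀| ≤
      (16 * C₀ * (a₀ + 1) + 1) * ε * |b₀| * ε :=
    mul_le_mul_of_nonneg_left (by linarith) (by positivity)
  linarith

lemma norm_young (u v : ℂ) {η : ℝ} (hη : 0 < η) (hη2 : η < 1 / 2) :
    (1 - η ^ 2) * ‖u‖ ^ 2 - ‖v‖ ^ 2 / η ^ 2 ≤ ‖u - v‖ ^ 2 := by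
  have h1 : (‖u‖ - ‖v‖) ^ 2 ≤ ‖u - v‖ ^ 2 := by
    have := abs_norm_sub_norm_le u v
    rw [← sq_abs]; gcongr
  have h2 : 0 ≤ (η * ‖u‖ - ‖v‖ / η) ^ 2 := sq_nonneg _
  have h3 : (η * ‖u‖ - ‖v‖ / η) ^ 2 = η ^ 2 * ‖u‖ ^ 2 - 2 * ‖u‖ * ‖v‖ + ‖v‖ ^ 2 / η ^ 2 := by
    field_simp; ring
  nlinarith [sq_nonneg ‖v‖]

/-- pointwise comparison of the form densities -/
lemma pointwise {A₁ A₂ : ℝ × ℝ → ℝ} {t₀ b₀ ε η C M : ℝ} {p : ℝ × ℝ} (w : ℝ × ℝ → ℂ)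
    (hε : 0 < ε) (hC : 1 < C) (hεC : ε * C < 1)
    (hη : 0 < η) (hη2 : η < 1 / 2) (hp : |p.2 - t₀| ≤ ε / 2)
    (hM : M ^ 2 ≤ C)
    (hd : Real.exp t₀ * |Atil A₁ A₂ t₀ p - Azero t₀ b₀ p| ≤ M * ε ^ 2 * |b₀|) :
    (1 - ε * C) * ((1 - η ^ 2) * (‖Gop (Real.exp t₀) t₀ b₀ w p‖ ^ 2 + ‖dY w p‖ ^ 2
        + 1 / 4 * ‖w p‖ ^ 2) - ε ^ 4 / η ^ 2 * C * |b₀| ^ 2 * ‖w p‖ ^ 2) ≤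
      Real.exp (2 * p.2) * ‖-Complex.I * dX w p - (Atil A₁ A₂ t₀ p : ℂ) * w p‖ ^ 2
      + ‖dY w p‖ ^ 2 + (1/4) * ‖w p‖ ^ 2 := by
  set κ := Real.exp t₀ with hκ
  have hκ0 : 0 < κ := Real.exp_pos _
  set Z := ‖-Complex.I * dX w p - (Atil A₁ A₂ t₀ p : ℂ) * w p‖ ^ 2 with hZ
  have hZ0 : 0 ≤ Z := by positivity
  have h1 : (1 - ε * C) * κ ^ 2 ≤ Real.exp (2 * p.2) := by
    have e : Real.exp (2 * p.2) = Real.exp (2 * (p.2 - t₀)) * κ ^ 2 := by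
      rw [hκ, ← Real.exp_nat_mul, ← Real.exp_add]; congr 1; push_cast; ring
    rw [e]
    refine mul_le_mul_of_nonneg_right ?_ (by positivity)
    have := Real.add_one_le_exp (2 * (p.2 - t₀))
    have := (abs_le.1 hp).1
    nlinarith
  set dA := Atil A₁ A₂ t₀ p - Azero t₀ b₀ p with hdA
  have hG : (κ : ℂ) * (-Complex.I * dX w p - (Atil A₁ A₂ t₀ p : ℂ) * w p) =
      Gop κ t₀ b₀ w p - ((κ * dA : ℝ) : ℂ) * w p := by
    have : κ * Real.exp (-t₀) = 1 := by rw [hκ, ← Real.exp_add]; simp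
    have e : κ * Azero t₀ b₀ p = -((p.2 - t₀) * b₀) := by
      unfold Azero; linear_combination (-(p.2 - t₀) * b₀) * this
    have e2 : κ * dA = κ * Atil A₁ A₂ t₀ p + (p.2 - t₀) * b₀ := by
      rw [hdA, mul_sub, e]; ring
    rw [e2]; unfold Gop; push_cast; ring
  have hκZ : κ ^ 2 * Z = ‖Gop κ t₀ b₀ w p - ((κ * dA : ℝ) : ℂ) * w p‖ ^ 2 := by
    rw [← hG, norm_mul, Complex.norm_real, Real.norm_of_nonneg hκ0.le, mul_pow]
  have hy := norm_young (Gop κ t₀ b₀ w p) (((κ * dA : ℝ) : ℂ) * w p) hη hη2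
  rw [← hκZ, norm_mul, Complex.norm_real, Real.norm_eq_abs, abs_mul, abs_of_pos hκ0, mul_pow] at hy
  have h2 : (κ * |dA|) ^ 2 ≤ ε ^ 4 * C * |b₀| ^ 2 := by
    have k1 : (κ * |dA|) ^ 2 ≤ (M * ε ^ 2 * |b₀|) ^ 2 := by gcongr
    have k2 : M ^ 2 * (ε ^ 4 * |b₀| ^ 2) ≤ C * (ε ^ 4 * |b₀| ^ 2) := by gcongr
    calc _ ≤ _ := k1
      _ = M ^ 2 * (ε ^ 4 * |b₀| ^ 2) := by ring
      _ ≤ _ := k2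
      _ = _ := by ring
  have h3 : (κ * |dA|) ^ 2 * ‖w p‖ ^ 2 / η ^ 2 ≤ ε ^ 4 / η ^ 2 * C * |b₀| ^ 2 * ‖w p‖ ^ 2 := by
    have : (κ * |dA|) ^ 2 * ‖w p‖ ^ 2 / η ^ 2 ≤ (ε ^ 4 * C * |b₀| ^ 2) * ‖w p‖ ^ 2 / η ^ 2 := by
      gcongr
    refine this.trans (le_of_eq ?_)
    ring
  have h4 : (1 - ε * C) * (κ ^ 2 * Z) ≤ Real.exp (2 * p.2) * Z := by
    have := mul_le_mul_of_nonneg_right h1 hZ0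
    linarith
  have h5 : 0 < 1 - ε * C := by linarith
  have h6 : (1 - ε * C) * (1 - η ^ 2) ≤ 1 := by
    have : (1 - ε * C) * (1 - η ^ 2) ≤ 1 * 1 :=
      mul_le_mul (by nlinarith) (by nlinarith) (by nlinarith) (by norm_num)
    linarith
  have hr : 0 ≤ ‖dY w p‖ ^ 2 + (1/4) * ‖w p‖ ^ 2 := by positivity
  have h7 := mul_le_mul_of_nonneg_right h6 hr
  have h8 : (1 - ε * C) * ((1 - η ^ 2) * ‖Gop κ t₀ b₀ w p‖ ^ 2 -
      ε ^ 4 / η ^ 2 * C * |b₀| ^ 2 * ‖w p‖ ^ 2) ≤ (1 - ε * C) * (κ ^ 2 * Z) :=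
    mul_le_mul_of_nonneg_left (by linarith) h5.le
  linarith

lemma form_cmp {A₁ A₂ : ℝ × ℝ → ℝ} (h1 : ContDiffOn ℝ 2 A₁ UHP) (h2 : ContDiffOn ℝ 2 A₂ UHP)
    {x₀ t₀ a b₀ ε η C M lam : ℝ} (w : ℝ × ℝ → ℂ)
    (hw : IsTestOn (Krect x₀ t₀ a ε) w)
    (hε : 0 < ε) (hC : 1 < C) (hεC : ε * C < 1)
    (hη : 0 < η) (hη2 : η < 1 / 2)
    (hM : M ^ 2 ≤ C)
    (hd : ∀ p ∈ Krect x₀ t₀ a ε,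
      Real.exp t₀ * |Atil A₁ A₂ t₀ p - Azero t₀ b₀ p| ≤ M * ε ^ 2 * |b₀|)
    (hq : qhatK A₁ A₂ x₀ t₀ a ε w < lam * ∫ p in Krect x₀ t₀ a ε, ‖w p‖ ^ 2) :
    (∫ p in Krect x₀ t₀ a ε, ‖Gop (Real.exp t₀) t₀ b₀ w p‖ ^ 2) +
      (∫ p in Krect x₀ t₀ a ε, ‖dY w p‖ ^ 2) <
      ((1 - η ^ 2)⁻¹ * (lam / (1 - ε * C) + (ε ^ 4 / η ^ 2) * C * |b₀| ^ 2) - 1 / 4) *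
        ∫ p in Krect x₀ t₀ a ε, ‖w p‖ ^ 2 := by
  have hs := test_supp hw
  have hdY : SuppIn _ _ _ _ (dY w) := test_fderiv hw (0, 1)
  have hdX : SuppIn _ _ _ _ (dX w) := test_fderiv hw (1, 0)
  have hG := Gop_supp hw (Real.exp t₀) t₀ b₀
  have hZ : SuppIn (x₀ - ε * a * Real.exp t₀ / 2) (x₀ + ε * a * Real.exp t₀ / 2)
      (t₀ - ε / 2) (t₀ + ε / 2)
      (fun p => (Real.exp p.2 : ℂ) * (-Complex.I * dX w p - (Atil A₁ A₂ t₀ p : ℂ) * w p)) := by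
    have c1 := hs.1
    have c2 := hdX.1
    have c3 := Atil_cont h1 h2 t₀
    refine ⟨by fun_prop, fun p hp => ?_⟩
    simp [hs.2 p hp, hdX.2 p hp]
  have iw := hs.intg
  have iY := hdY.intg
  have iG := hG.intg
  have iZ := hZ.intg
  have eZ : ∀ p : ℝ × ℝ,
      ‖(Real.exp p.2 : ℂ) * (-Complex.I * dX w p - (Atil A₁ A₂ t₀ p : ℂ) * w p)‖ ^ 2 =
      Real.exp (2 * p.2) * ‖-Complex.I * dX w p - (Atil A₁ A₂ t₀ p : ℂ) * w p‖ ^ 2 := by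
    intro p
    rw [norm_mul, mul_pow, Complex.norm_real, Real.norm_of_nonneg (Real.exp_pos _).le,
      ← Real.exp_nat_mul]
    push_cast; rfl
  simp_rw [eZ] at iZ
  set K := Krect x₀ t₀ a ε with hK
  have hKm : MeasurableSet K := measurableSet_Ioo.prod measurableSet_Ioo
  have j1 : Integrable fun p => ‖Gop (Real.exp t₀) t₀ b₀ w p‖ ^ 2 + ‖dY w p‖ ^ 2 := iG.add iY
  have j2 : Integrable fun p => ‖Gop (Real.exp t₀) t₀ b₀ w p‖ ^ 2 + ‖dY w p‖ ^ 2
        + 1 / 4 * ‖w p‖ ^ 2 := j1.add (iw.const_mul _)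
  have j3 : Integrable fun p => (1 - η ^ 2) * (‖Gop (Real.exp t₀) t₀ b₀ w p‖ ^ 2 + ‖dY w p‖ ^ 2
        + 1 / 4 * ‖w p‖ ^ 2) := j2.const_mul _
  have j4 : Integrable fun p => ε ^ 4 / η ^ 2 * C * |b₀| ^ 2 * ‖w p‖ ^ 2 := iw.const_mul _
  have j5 : Integrable fun p => (1 - ε * C) * ((1 - η ^ 2) *
      (‖Gop (Real.exp t₀) t₀ b₀ w p‖ ^ 2 + ‖dY w p‖ ^ 2
        + 1 / 4 * ‖w p‖ ^ 2) - ε ^ 4 / η ^ 2 * C * |b₀| ^ 2 * ‖w p‖ ^ 2) := (j3.sub j4).const_mul _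
  have j6 : Integrable fun p : ℝ × ℝ =>
      Real.exp (2 * p.2) * ‖-Complex.I * dX w p - (Atil A₁ A₂ t₀ p : ℂ) * w p‖ ^ 2
      + ‖dY w p‖ ^ 2 + (1/4) * ‖w p‖ ^ 2 := (iZ.add iY).add (iw.const_mul _)
  have hmono := setIntegral_mono_on (μ := volume) j5.integrableOn j6.integrableOn hKm
    (fun p hp => by
      refine pointwise w hε hC hεC hη hη2 ?_ hM (hd p hp)
      have := hp.2
      rw [abs_le]; constructor <;> linarith [this.1, this.2])
  rw [integral_const_mul, integral_sub j3.integrableOn j4.integrableOn, integral_const_mul,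
    integral_const_mul, integral_add j1.integrableOn (iw.const_mul _).integrableOn,
    integral_add iG.integrableOn iY.integrableOn, integral_const_mul] at hmono
  change _ ≤ qhatK A₁ A₂ x₀ t₀ a ε w at hmono
  have hlt := hmono.trans_lt hq
  set X := (∫ p in K, ‖Gop (Real.exp t₀) t₀ b₀ w p‖ ^ 2) + (∫ p in K, ‖dY w p‖ ^ 2)
  set W := ∫ p in K, ‖w p‖ ^ 2
  have p1 : 0 < 1 - ε * C := by linarith
  have p2 : 0 < 1 - η ^ 2 := by nlinarith
  rw [← lt_div_iff₀' p1] at hlt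
  have hlt2 : (1 - η ^ 2) * (X + 1 / 4 * W) <
      (lam / (1 - ε * C) + (ε ^ 4 / η ^ 2) * C * |b₀| ^ 2) * W := by
    have : lam * W / (1 - ε * C) = lam / (1 - ε * C) * W := by ring
    linarith
  rw [← lt_div_iff₀' p2] at hlt2
  have : (lam / (1 - ε * C) + (ε ^ 4 / η ^ 2) * C * |b₀| ^ 2) * W / (1 - η ^ 2) =
    (1 - η ^ 2)⁻¹ * (lam / (1 - ε * C) + (ε ^ 4 / η ^ 2) * C * |b₀| ^ 2) * W := by ring
  linarith

lemma heav_sum {μ β : ℝ} (hβ : 0 < β) :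
    ∑' k : ℕ, heav (μ - (2 * (k : ℝ) + 1) * β) = (⌈(μ / β - 1) / 2⌉₊ : ℕ) := by
  set l := ⌈(μ / β - 1) / 2⌉₊ with hl
  have h : ∀ k : ℕ, (0 < μ - (2 * (k : ℝ) + 1) * β) ↔ k < l := by
    intro k
    rw [hl, Nat.lt_ceil, sub_pos, lt_div_iff₀ (by norm_num : (0 : ℝ) < 2), lt_sub_iff_add_lt,
      lt_div_iff₀ hβ, mul_comm (k : ℝ) 2]
  rw [tsum_eq_sum (s := Finset.range l)]
  · rw [Finset.sum_congr rfl (g := fun _ => (1 : ℝ))]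
    · simp
    · intro k hk
      simp only [heav]
      rw [if_pos ((h k).2 (Finset.mem_range.1 hk))]
  · intro k hk
    simp only [heav]
    rw [if_neg]
    rw [h k]
    simpa using hk

/-- upper bound for the counting function of `q̂^Ã_K`. -/
theorem counting_upper_bound_variable_field
    (C₀ : ℝ) (hC₀ : 0 < C₀) (a₀ : ℝ) (ha₀ : 1 < a₀) :
    ∃ C₁ : ℝ, 1 < C₁ ∧
      ∀ A₁ A₂ : ℝ × ℝ → ℝ, ContDiffOn ℝ 2 A₁ UHP → ContDiffOn ℝ 2 A₂ UHP →
      H2 C₀ A₁ A₂ →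
      ∀ a : ℝ, 1 / a₀ < a → a ≤ a₀ →
      ∀ ε₀ : ℝ, 0 < ε₀ → ε₀ < 1 / (2 * C₁) →
      ∀ x₀ t₀ : ℝ, 1 < intenB A₁ A₂ (x₀, Real.exp t₀) →
      ∀ lam : ℝ, 1 < lam → ∀ η : ℝ, 0 < η → η < 1 / 2 →
        (NKA A₁ A₂ x₀ t₀ a ε₀ lam : ℝ) ≤
          (a * ε₀ ^ 2 * Real.exp t₀) * intenB A₁ A₂ (x₀, Real.exp t₀) /
              (2 * π * Real.exp t₀) *
            ∑' k : ℕ, heav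
              ((1 - η ^ 2)⁻¹ * (lam / (1 - ε₀ * C₁) +
                  (ε₀ ^ 4 / η ^ 2) * C₁ * intenB A₁ A₂ (x₀, Real.exp t₀) ^ 2)
                - 1/4 - (2 * (k : ℝ) + 1) * intenB A₁ A₂ (x₀, Real.exp t₀)) := by
  set M : ℝ := 16 * C₀ * (a₀ + 1) + 1 with hM
  have hm : 0 < C₀ * (a₀ + 1) := by positivity
  refine ⟨M ^ 2 + 1, by nlinarith, ?_⟩
  set C : ℝ := M ^ 2 + 1 with hC
  have hC1 : 1 < C := by nlinarith
  intro A₁ A₂ h1 h2 hH a ha ha' ε hε hεC x₀ t₀ hβ lam hlam η hη hη2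
  have ha0 : 0 < a := lt_trans (by positivity) ha
  set b₀ := fieldB A₁ A₂ (x₀, Real.exp t₀) with hb₀
  have hin : intenB A₁ A₂ (x₀, Real.exp t₀) = |b₀| := rfl
  rw [hin] at hβ ⊢
  have hβ0 : 0 < |b₀| := by linarith
  have hεC' : ε * C < 1 / 2 := by
    rw [lt_div_iff₀ (by positivity)] at hεC; linarith
  have hε2 : ε ≤ 1 / 2 := by nlinarith
  have hK : 2 * C₀ * (a₀ + 1) * ε ≤ 1 := by
    have : 2 * C₀ * (a₀ + 1) ≤ C := by nlinarith
    have := mul_le_mul_of_nonneg_right this hε.le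
    linarith
  have hκ : 0 < Real.exp t₀ := Real.exp_pos _
  have hd : ∀ p ∈ Krect x₀ t₀ a ε,
      Real.exp t₀ * |Atil A₁ A₂ t₀ p - Azero t₀ b₀ p| ≤ M * ε ^ 2 * |b₀| := by
    rintro ⟨x, t⟩ hp
    obtain ⟨⟨p1, p2⟩, p3, p4⟩ := hp
    simp only at p1 p2 p3 p4
    have hle : ε * a * Real.exp t₀ ≤ ε * a₀ * Real.exp t₀ := by gcongr
    have hpos : 0 < ε * a * Real.exp t₀ := by positivity
    refine pot_var hC₀ ha₀ h1 h2 hH hε hε2 hK hβ.le ?_ ?_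
    · rw [abs_le]; constructor <;> linarith
    · rw [abs_le]; constructor <;> linarith
  set μ : ℝ := (1 - η ^ 2)⁻¹ * (lam / (1 - ε * C) + (ε ^ 4 / η ^ 2) * C * |b₀| ^ 2) - 1 / 4 with hμ
  rw [heav_sum hβ0]
  set l : ℕ := ⌈(μ / |b₀| - 1) / 2⌉₊ with hl
  have hμl : μ ≤ (2 * l + 1) * |b₀| := by
    have := Nat.le_ceil ((μ / |b₀| - 1) / 2)
    rw [← hl] at this
    rw [← div_le_iff₀ hβ0]; linarith
  set R : ℝ := (a * ε ^ 2 * Real.exp t₀) * |b₀| / (2 * π * Real.exp t₀) * l with hR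
  have hR0 : 0 ≤ R := by positivity
  have hN : NKA A₁ A₂ x₀ t₀ a ε lam ≤ ⌊R⌋₊ := by
    refine csSup_le' ?_
    rintro n ⟨V, hV, hn, hq⟩
    rw [Nat.le_floor_iff hR0]
    rcases Nat.eq_zero_or_pos n with h0 | hpos
    · rw [h0]; simpa using hR0
    have hfd : FiniteDimensional ℂ V := Module.finite_of_finrank_pos (by omega)
    have hKr : Krect x₀ t₀ a ε = Set.Ioo (x₀ - ε * a * Real.exp t₀ / 2)
        (x₀ + ε * a * Real.exp t₀ / 2) ×ˢ Set.Ioo (t₀ - ε / 2) ((t₀ - ε / 2) + ε) := by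
      unfold Krect; congr 2; ring
    have hpos : 0 < ε * a * Real.exp t₀ := by positivity
    have := landau_count (A := x₀ - ε * a * Real.exp t₀ / 2)
      (B := x₀ + ε * a * Real.exp t₀ / 2) (D := t₀ - ε / 2) (T := ε) (by linarith) hε
      (Real.exp t₀) b₀ t₀ μ hκ (abs_pos.1 hβ0) l hμl V
      (fun u hu => by rw [← hKr]; exact hV hu)
      (fun u hu hu0 => by
        rw [← hKr]
        exact form_cmp h1 h2 u (hV hu) hε hC1 (by linarith) hη hη2 (by linarith) hd (hq u hu hu0))
    rw [hn] at this
    refine this.trans (le_of_eq ?_)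
    rw [hR]; ring
  exact (Nat.cast_le.2 hN).trans (Nat.floor_le hR0)
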